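/- Let Z_{m,n} denote the number of perfect matchings of the m×n torus grid graph. Then (1/(mn))·log Z_{m,n} → G/π as m, n → ∞ through even integers, where G is Catalan's constant. Precisely: for every ε > 0 there exists M such that for all even integers m, n ≥ M, |(1/(mn))·log Z_{m,n} − G/π| < ε. -/

import Mathlib

/-- The m×n torus grid graph on vertex set (ℤ/mℤ)×(ℤ/nℤ): two vertices are adjacent
iff they differ by (±1, 0) or (0, ±1). -/
def torusGridGraph (m n : ℕ) : SimpleGraph (ZMod m × ZMod n) :=
  SimpleGraph.fromRel (fun u v => v = u + (1, 0) ∨ v = u + (0, 1))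

/-- A perfect matching of a graph `G` is a set of edges of `G` covering each vertex
exactly once. -/
def IsPerfectMatchingSet {V : Type*} (G : SimpleGraph V) (M : Finset (Sym2 V)) : Prop :=
  (∀ e ∈ M, e ∈ G.edgeSet) ∧ ∀ v : V, ∃! e, e ∈ M ∧ v ∈ e

/-- The number of perfect matchings of `G`. -/
noncomputable def numPerfectMatchings {V : Type*} (G : SimpleGraph V) : ℕ :=
  Nat.card {M : Finset (Sym2 V) // IsPerfectMatchingSet G M}

/-- Catalan's constant G = 1 - 1/3² + 1/5² - 1/7² + ⋯ -/
noncomputable def catalanConstant : ℝ := ∑' k : ℕ, (-1 : ℝ) ^ k / (2 * k + 1) ^ 2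


open Matrix

set_option linter.unusedSectionVars false

section Compound

variable {I : Type*} [LinearOrder I] [Fintype I] {R : Type*} [CommRing R]

/-- ordered embedding of a `k`-subset -/
def psEmb {k : ℕ} (s : Set.powersetCard I k) : Fin k ↪o I :=
  (s : Finset I).orderEmbOfFin (Set.powersetCard.card_eq s)

/-- `k`-th compound matrix -/
def cmpd (k : ℕ) (A : Matrix I I R) :
    Matrix (Set.powersetCard I k) (Set.powersetCard I k) R :=
  fun s t => (A.submatrix (psEmb s) (psEmb t)).det

lemma cmpd_eq_toMatrix (k : ℕ) (A : Matrix I I R) :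
    cmpd k A = LinearMap.toMatrix ((Pi.basisFun R I).exteriorPower k)
      ((Pi.basisFun R I).exteriorPower k) (exteriorPower.map k (Matrix.toLin' A)) := by
  ext s t
  rw [LinearMap.toMatrix_apply, exteriorPower.basis_repr_apply, exteriorPower.basis_apply,
    exteriorPower.ιMulti_family, exteriorPower.map_apply_ιMulti,
    exteriorPower.ιMultiDual_apply_ιMulti, cmpd, ← Matrix.det_transpose]
  congr 1
  ext i j
  simp [psEmb, Set.powersetCard.ofFinEmbEquiv_symm_apply]

lemma cmpd_mul (k : ℕ) (A B : Matrix I I R) : cmpd k (A * B) = cmpd k A * cmpd k B := by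
  rw [cmpd_eq_toMatrix, cmpd_eq_toMatrix, cmpd_eq_toMatrix, ← LinearMap.toMatrix_mul,
    Matrix.toLin'_mul]
  exact congrArg _ (exteriorPower.map_comp (n := k) (Matrix.toLin' B) (Matrix.toLin' A))

lemma cmpd_one (k : ℕ) : cmpd k (1 : Matrix I I R) = 1 := by
  rw [cmpd_eq_toMatrix, Matrix.toLin'_one, exteriorPower.map_id, LinearMap.toMatrix_id]

lemma cmpd_pow (k : ℕ) (A : Matrix I I R) (p : ℕ) : cmpd k (A ^ p) = cmpd k A ^ p := by
  induction p with
  | zero => simp [cmpd_one]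
  | succ p ih => rw [pow_succ, cmpd_mul, ih, pow_succ]

lemma cmpd_transpose (k : ℕ) (A : Matrix I I R) : cmpd k Aᵀ = (cmpd k A)ᵀ := by
  ext s t
  simp only [cmpd, Matrix.transpose_apply]
  rw [← Matrix.det_transpose]
  rfl

lemma cmpd_diagonal_diag (k : ℕ) (d : I → R) (s : Set.powersetCard I k) :
    cmpd k (Matrix.diagonal d) s s = ∏ i ∈ (s : Finset I), d i := by
  have : (Matrix.diagonal d).submatrix (psEmb s) (psEmb s) =
      Matrix.diagonal (d ∘ psEmb s) := by
    ext i j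
    simp [Matrix.diagonal_apply]
  rw [cmpd, this, Matrix.det_diagonal]
  have h : (s : Finset I) = Finset.univ.map (psEmb s).toEmbedding := by
    ext x
    simp [psEmb]
  conv_rhs => rw [h]
  simp

lemma trace_cmpd_of_diagonalize (k : ℕ) (C W : Matrix I I R) (d : I → R) (hW : IsUnit W.det)
    (h : C * W = W * Matrix.diagonal d) (p : ℕ) :
    (cmpd k C ^ p).trace = ∑ s : Set.powersetCard I k, ∏ i ∈ (s : Finset I), d i ^ p := by
  have hW' := Matrix.mul_nonsing_inv W hW
  have hW'' := Matrix.nonsing_inv_mul W hW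
  have h2 : ∀ p : ℕ, C ^ p * W = W * Matrix.diagonal (fun i => d i ^ p) := by
    intro p
    induction p with
    | zero => simp
    | succ p ih =>
      rw [pow_succ, Matrix.mul_assoc, h, ← Matrix.mul_assoc, ih, Matrix.mul_assoc,
        Matrix.diagonal_mul_diagonal]
      simp [pow_succ]
  have h3 : C ^ p = W * Matrix.diagonal (fun i => d i ^ p) * W⁻¹ := by
    rw [← h2, Matrix.mul_assoc, hW', Matrix.mul_one]
  rw [← cmpd_pow, h3, cmpd_mul, cmpd_mul, Matrix.trace_mul_cycle, ← cmpd_mul, hW'', cmpd_one,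
    Matrix.one_mul, Matrix.trace]
  exact Finset.sum_congr rfl fun s _ => cmpd_diagonal_diag k _ s

end Compound

section TraceWalk

variable {ι : Type*} [Fintype ι] [DecidableEq ι] {R : Type*} [CommSemiring R]

lemma pow_apply_walk (P : Matrix ι ι R) (k : ℕ) (a b : ι) :
    (P ^ k) a b = ∑ x : Fin (k + 1) → ι, if x 0 = a ∧ x (Fin.last k) = b then
      ∏ i : Fin k, P (x i.castSucc) (x i.succ) else 0 := by
  induction k generalizing b with
  | zero =>
    rw [← (Equiv.funUnique (Fin 1) ι).symm.sum_comp]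
    simp only [Equiv.funUnique_symm_apply, uniqueElim_const, pow_zero, Matrix.one_apply,
      Finset.univ_eq_empty, Finset.prod_empty]
    rw [Finset.sum_eq_single a]
    · simp
    · intro c _ hc; simp [hc]
    · simp
  | succ k ih =>
    rw [pow_succ, Matrix.mul_apply, ← (Fin.snocEquiv (fun _ => ι)).sum_comp, Fintype.sum_prod_type]
    simp only [Fin.snocEquiv, Equiv.coe_fn_mk, Fin.snoc_last]
    trans ∑ x : Fin (k + 1) → ι, if x 0 = a then
      (∏ i : Fin k, P (x i.castSucc) (x i.succ)) * P (x (Fin.last k)) b else 0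
    · simp_rw [ih, Finset.sum_mul]
      rw [Finset.sum_comm]
      refine Finset.sum_congr rfl fun x _ => ?_
      rw [Finset.sum_eq_single (x (Fin.last k))]
      · by_cases h : x 0 = a <;> simp [h]
      · intro c _ hc; simp [hc.symm]
      · simp
    · symm
      rw [Finset.sum_eq_single b]
      · refine Finset.sum_congr rfl fun x _ => ?_
        have e0 : (Fin.snoc (α := fun _ => ι) x b : Fin (k+1+1) → ι) 0 = x 0 := by
          rw [← Fin.castSucc_zero, Fin.snoc_castSucc]
        rw [e0, Fin.prod_univ_castSucc]
        by_cases h : x 0 = a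
        · simp only [h, true_and, if_true]
          congr 1
          · refine Finset.prod_congr rfl fun i _ => ?_
            rw [Fin.snoc_castSucc, ← Fin.castSucc_succ, Fin.snoc_castSucc]
          · rw [Fin.snoc_castSucc, Fin.succ_last, Fin.snoc_last]
        · simp [h]
      · intro c _ hc; simp [hc]
      · simp

lemma trace_pow_walk (P : Matrix ι ι R) (k : ℕ) :
    (P ^ (k + 1)).trace = ∑ x : Fin (k + 1) → ι, ∏ i, P (x i) (x (i + 1)) := by
  rw [Matrix.trace]
  simp only [Matrix.diag_apply, pow_apply_walk]
  rw [Finset.sum_comm, ← (Fin.snocEquiv (fun _ => ι)).sum_comp, Fintype.sum_prod_type,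
    Finset.sum_comm]
  refine Finset.sum_congr rfl fun x _ => ?_
  simp only [Fin.snocEquiv, Equiv.coe_fn_mk, Fin.snoc_last]
  have e0 : ∀ b, (Fin.snoc (α := fun _ => ι) x b : Fin (k+1+1) → ι) 0 = x 0 := by
    intro b
    rw [← Fin.castSucc_zero, Fin.snoc_castSucc]
  simp only [e0]
  rw [Finset.sum_eq_single (x 0)]
  · rw [Finset.sum_eq_single (x 0)]
    · simp only [and_self, if_true]
      refine Finset.prod_congr rfl fun i _ => ?_
      rw [Fin.snoc_castSucc]
      congr 1
      induction i using Fin.lastCases with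
      | last => rw [Fin.succ_last, Fin.snoc_last]; simp
      | cast i => rw [← Fin.castSucc_succ, Fin.snoc_castSucc]; simp
    · intro c _ hc; simp [hc.symm]
    · simp
  · intro c _ hc
    refine Finset.sum_eq_zero fun y _ => ?_
    rw [if_neg]
    rintro ⟨h1, h2⟩
    exact hc (h2.trans h1.symm)
  · simp

end TraceWalk


/-- exactly one of four propositions holds -/
def Ex1 (a b c d : Prop) : Prop :=
  (a ∧ ¬b ∧ ¬c ∧ ¬d) ∨ (¬a ∧ b ∧ ¬c ∧ ¬d) ∨ (¬a ∧ ¬b ∧ c ∧ ¬d) ∨ (¬a ∧ ¬b ∧ ¬c ∧ d)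

set_option linter.unusedSectionVars false

section Abstract

variable {α : Type*} (nx pv : α → α) (ev : α → Prop)

/-- particle form of the row condition -/
def hopCond (X Y h : α → Prop) : Prop :=
  (∀ j, ev j → Ex1 (¬ X j) (Y j) (h j) (h (pv j))) ∧
  (∀ j, ¬ ev j → Ex1 (X j) (¬ Y j) (h j) (h (pv j)))

open Classical in
/-- the hopping map -/
noncomputable def hopMap (h : α → Prop) (j : α) : α :=
  if ev j ∧ h j then nx j else if ev j ∧ h (pv j) then pv j else j

variable {nx pv ev}

lemma hop_mapsTo (h1 : ∀ j, nx (pv j) = j) (h2 : ∀ j, pv (nx j) = j)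
    (h3 : ∀ j, ev (nx j) ↔ ¬ ev j) (h4 : ∀ j, ev (pv j) ↔ ¬ ev j) (h5 : ∀ j, nx j ≠ pv j)
    {X Y h : α → Prop} (hc : hopCond pv ev X Y h) {j : α} (hj : X j) :
    Y (hopMap nx pv ev h j) := by
  obtain ⟨ha, hb⟩ := hc
  have a1 := ha j
  have a2 := hb j
  have a3 := hb (nx j)
  have a4 := hb (pv j)
  unfold hopMap
  unfold Ex1 at *
  grind

lemma hop_injOn (h1 : ∀ j, nx (pv j) = j) (h2 : ∀ j, pv (nx j) = j)
    (h3 : ∀ j, ev (nx j) ↔ ¬ ev j) (h4 : ∀ j, ev (pv j) ↔ ¬ ev j) (h5 : ∀ j, nx j ≠ pv j)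
    {X Y h : α → Prop} (hc : hopCond pv ev X Y h) {j j' : α} (hj : X j) (hj' : X j')
    (he : hopMap nx pv ev h j = hopMap nx pv ev h j') : j = j' := by
  obtain ⟨ha, hb⟩ := hc
  have a1 := ha j
  have a2 := hb j
  have a3 := hb (nx j)
  have a4 := hb (pv j)
  have b1 := ha j'
  have b2 := hb j'
  have b3 := hb (nx j')
  have b4 := hb (pv j')
  have c1 := h1 j
  have c2 := h2 j
  have c1' := h1 j'
  have c2' := h2 j'
  have := h3 j
  have := h4 j
  have := h3 j'
  have := h4 j'
  unfold hopMap at he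
  unfold Ex1 at *
  split_ifs at he <;> grind

lemma hop_surj (h1 : ∀ j, nx (pv j) = j) (h2 : ∀ j, pv (nx j) = j)
    (h3 : ∀ j, ev (nx j) ↔ ¬ ev j) (h4 : ∀ j, ev (pv j) ↔ ¬ ev j) (h5 : ∀ j, nx j ≠ pv j)
    {X Y h : α → Prop} (hc : hopCond pv ev X Y h) {y : α} (hy : Y y) :
    ∃ j, X j ∧ hopMap nx pv ev h j = y := by
  obtain ⟨ha, hb⟩ := hc
  have a1 := ha y
  have a2 := hb y
  have a3 := ha (nx y)
  have a4 := ha (pv y)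
  have := h1 y
  have := h2 y
  have := h3 y
  have := h4 y
  have hX : ∃ j, X j ∧ ((j = y ∧ ¬ (ev j ∧ h j) ∧ ¬ (ev j ∧ h (pv j))) ∨
      (j = nx y ∧ ev j ∧ h (pv j) ∧ ¬ h j) ∨ (j = pv y ∧ ev j ∧ h j)) := by
    by_cases e : ev y
    · refine ⟨y, ?_⟩
      unfold Ex1 at *; grind
    · by_cases hx : X y
      · exact ⟨y, hx, Or.inl ⟨rfl, by simp [e], by simp [e]⟩⟩
      · by_cases hh : h y
        · refine ⟨nx y, ?_⟩
          unfold Ex1 at *; grind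
        · refine ⟨pv y, ?_⟩
          unfold Ex1 at *; grind
  obtain ⟨j, hj, hj'⟩ := hX
  refine ⟨j, hj, ?_⟩
  unfold hopMap
  grind

lemma hop_recover (h1 : ∀ j, nx (pv j) = j) (h2 : ∀ j, pv (nx j) = j)
    (h3 : ∀ j, ev (nx j) ↔ ¬ ev j) (h4 : ∀ j, ev (pv j) ↔ ¬ ev j) (h5 : ∀ j, nx j ≠ pv j)
    {X Y h : α → Prop} (hc : hopCond pv ev X Y h) (j : α) :
    h j ↔ ((ev j ∧ X j ∧ hopMap nx pv ev h j = nx j) ∨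
      (¬ ev j ∧ X (nx j) ∧ hopMap nx pv ev h (nx j) = j)) := by
  obtain ⟨ha, hb⟩ := hc
  have a1 := ha j
  have a2 := hb j
  have a3 := ha (nx j)
  have := h1 j
  have := h2 j
  have := h3 j
  have := h4 j
  have := h5 j
  have := h5 (nx j)
  unfold hopMap
  unfold Ex1 at *
  grind

lemma hop_construct (h1 : ∀ j, nx (pv j) = j) (h2 : ∀ j, pv (nx j) = j)
    (h3 : ∀ j, ev (nx j) ↔ ¬ ev j) (h4 : ∀ j, ev (pv j) ↔ ¬ ev j) (h5 : ∀ j, nx j ≠ pv j)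
    {X Y : α → Prop} {f : α → α} (hm : ∀ j, X j → Y (f j))
    (hi : ∀ j j', X j → X j' → f j = f j' → j = j') (hs : ∀ y, Y y → ∃ j, X j ∧ f j = y)
    (hadm : ∀ j, X j → f j = j ∨ (ev j ∧ (f j = nx j ∨ f j = pv j))) :
    let h : α → Prop := fun j => (ev j ∧ X j ∧ f j = nx j) ∨ (¬ ev j ∧ X (nx j) ∧ f (nx j) = j)
    hopCond pv ev X Y h ∧ ∀ j, X j → hopMap nx pv ev h j = f j := by
  intro h
  have key : ∀ j, X j → hopMap nx pv ev h j = f j := by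
    intro j hj
    have := h1 j
    have := h2 j
    have := h3 j
    have := h4 j
    have := h5 j
    have := hadm j hj
    unfold hopMap
    simp only [h]
    grind
  refine ⟨⟨?_, ?_⟩, key⟩
  · intro j hj
    have c1 := h1 j
    have c2 := h2 j
    have c3 := h3 j
    have c4 := h4 j
    have c5 := h5 j
    have e1 : h j ↔ X j ∧ f j = nx j := by simp [h, hj]
    have e2 : h (pv j) ↔ X j ∧ f j = pv j := by simp [h, hj, c4, c1]
    have e3 : Y j ↔ X j ∧ f j = j := by
      constructor
      · intro hy
        obtain ⟨i, hi1, hi2⟩ := hs j hy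
        rcases hadm i hi1 with c | ⟨c0, c | c⟩
        · rw [c] at hi2; rw [← hi2]; exact ⟨hi1, c⟩
        · exact absurd hj (by rw [← hi2, c, h3]; exact not_not.mpr c0)
        · exact absurd hj (by rw [← hi2, c, h4]; exact not_not.mpr c0)
      · rintro ⟨ha, hb⟩
        rw [← hb]; exact hm j ha
    have c6 := hadm j
    have c7 : nx j ≠ j := fun hh => absurd c3 (by rw [hh]; exact iff_not_self)
    have c8 : pv j ≠ j := fun hh => absurd c4 (by rw [hh]; exact iff_not_self)
    rw [Ex1, e1, e2, e3]
    by_cases hx : X j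
    · have := c6 hx
      rcases this with c | ⟨_, c | c⟩ <;> simp [hx, c, c7, c8, c5, c5.symm, c7.symm, c8.symm]
    · simp [hx]
  · intro j hj
    have c1 := h1 j
    have c2 := h2 j
    have c3 := h3 j
    have c4 := h4 j
    have c5 := h5 j
    have e1 : h j ↔ X (nx j) ∧ f (nx j) = j := by simp [h, hj]
    have e2 : h (pv j) ↔ X (pv j) ∧ f (pv j) = j := by simp [h, hj, c4, c1]
    have e3 : Y j ↔ (X j ∧ f j = j) ∨ (X (nx j) ∧ f (nx j) = j) ∨ (X (pv j) ∧ f (pv j) = j) := by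
      constructor
      · intro hy
        obtain ⟨i, hi1, hi2⟩ := hs j hy
        rcases hadm i hi1 with c | ⟨_, c | c⟩
        · left; rw [c] at hi2; rw [← hi2]; exact ⟨hi1, c⟩
        · right; right; rw [← hi2, c, h2]; exact ⟨hi1, c⟩
        · right; left; rw [← hi2, c, h1]; exact ⟨hi1, c⟩
      · rintro (⟨ha, hb⟩ | ⟨ha, hb⟩ | ⟨ha, hb⟩) <;> (rw [← hb]; exact hm _ ha)
    have c6 := hadm j
    have c7 : nx j ≠ j := fun hh => absurd c3 (by rw [hh]; exact iff_not_self)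
    have c8 : pv j ≠ j := fun hh => absurd c4 (by rw [hh]; exact iff_not_self)
    have d1 := hi j (nx j)
    have d2 := hi j (pv j)
    have d3 := hi (nx j) (pv j)
    have d4 : X j → f j = j := fun hx => (c6 hx).resolve_right fun hh => hj hh.1
    rw [Ex1, e1, e2, e3]
    clear h1 h2 h3 h4 h5 hm hi hs hadm key e1 e2 e3
    grind

end Abstract


set_option linter.unusedSectionVars false

section Row

variable {n : ℕ}

/-- cyclic successor -/
def nxt (j : Fin n) : Fin n :=
  ⟨if j.val + 1 < n then j.val + 1 else 0, by have := j.2; split_ifs <;> omega⟩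

/-- cyclic predecessor -/
def prv (j : Fin n) : Fin n :=
  ⟨if j.val = 0 then n - 1 else j.val - 1, by have := j.2; split_ifs <;> omega⟩

/-- even column -/
def evn (j : Fin n) : Prop := j.val % 2 = 0

instance : DecidablePred (evn (n := n)) := fun j => inferInstanceAs (Decidable (j.val % 2 = 0))

lemma nxt_prv (j : Fin n) : nxt (prv j) = j := by
  have := j.2
  ext
  simp only [nxt, prv]
  split_ifs <;> omega

lemma prv_nxt (j : Fin n) : prv (nxt j) = j := by
  have := j.2
  ext
  simp only [nxt, prv]
  by_cases hj : j.val + 1 < n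
  · simp [hj]
  · simp [hj]; omega

lemma evn_nxt (hn : Even n) (j : Fin n) : evn (nxt j) ↔ ¬ evn j := by
  have := j.2
  obtain ⟨r, hr⟩ := hn
  simp only [nxt, evn]
  split_ifs <;> omega

lemma evn_prv (hn : Even n) (j : Fin n) : evn (prv j) ↔ ¬ evn j := by
  have := j.2
  obtain ⟨r, hr⟩ := hn
  simp only [prv, evn]
  split_ifs <;> omega

lemma nxt_ne_prv (hn : 4 ≤ n) (j : Fin n) : nxt j ≠ prv j := by
  have := j.2
  rw [Ne, Fin.ext_iff]
  simp only [nxt, prv]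
  split_ifs <;> omega

/-- one-particle transfer matrix, with boundary sign `ε` -/
def hopMat (n : ℕ) (ε : ℂ) : Matrix (Fin n) (Fin n) ℂ := fun b a =>
  if b = a then 1 else if evn a ∧ b = nxt a then 1 else
    if evn a ∧ b = prv a then (if a.val = 0 then ε else 1) else 0

/-- admissible hops -/
def adm (a b : Fin n) : Prop := b = a ∨ (evn a ∧ (b = nxt a ∨ b = prv a))

lemma hopMat_of_not_adm {ε : ℂ} {a b : Fin n} (h : ¬ adm a b) : hopMat n ε b a = 0 := by
  unfold adm at h
  unfold hopMat
  grind

lemma hopMat_of_adm {ε : ℂ} {a b : Fin n} (hn : 4 ≤ n) (h : adm a b) :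
    hopMat n ε b a = if a.val = 0 ∧ b.val = n - 1 then ε else 1 := by
  have ha := a.2
  have hb := b.2
  unfold adm evn at h
  unfold hopMat evn
  simp only [Fin.ext_iff, nxt, prv] at *
  split_ifs at * <;> first | rfl | (exfalso; omega)

/-- noncrossing -/
lemma adm_lt (hne : Even n) {a b a' b' : Fin n} (h : adm a b) (h' : adm a' b') (hlt : a < a')
    (hne' : b ≠ b') (hw : ¬ (a.val = 0 ∧ b.val = n - 1)) : b < b' := by
  have ha := a.2
  have hb := b.2
  have ha' := a'.2
  have hb' := b'.2
  obtain ⟨r, hr⟩ := hne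
  unfold adm evn at h h'
  simp only [Fin.ext_iff, nxt, prv, Fin.lt_def, Ne] at *
  split_ifs at * <;> omega

lemma perm_eq_one_of_strictMono {k : ℕ} (σ : Equiv.Perm (Fin k)) (h : StrictMono σ) : σ = 1 := by
  have : StrictMono.orderIsoOfSurjective σ h σ.surjective = OrderIso.refl _ :=
    Subsingleton.elim _ _
  ext i
  have := congrArg (fun f : Fin k ≃o Fin k => f i) this
  simpa using congrArg Fin.val this

lemma sign_term (hne : Even n) (hn : 4 ≤ n) {k : ℕ} (x y : Fin k ↪o Fin n) (σ : Equiv.Perm (Fin k))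
    (h : ∀ i, adm (x i) (y (σ i))) :
    (Equiv.Perm.sign σ : ℤ) • ∏ i, hopMat n (((-1 : ℤˣ) ^ (k - 1) : ℤˣ) : ℤ) (y (σ i)) (x i)
      = (1 : ℂ) := by
  by_cases hw : ∃ i, (x i).val = 0 ∧ (y (σ i)).val = n - 1
  · obtain ⟨i0, hx, hy⟩ := hw
    obtain ⟨k, rfl⟩ : ∃ k', k = k' + 1 := ⟨k - 1, by have := i0.2; omega⟩
    have hi0 : i0 = 0 := by
      by_contra hh
      have : x 0 < x i0 := x.strictMono (Fin.pos_iff_ne_zero.mpr hh)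
      rw [Fin.lt_def] at this; omega
    subst hi0
    have hpos : ∀ i, i ≠ 0 → (x i).val ≠ 0 := by
      intro i hi
      have : x 0 < x i := x.strictMono (Fin.pos_iff_ne_zero.mpr hi)
      rw [Fin.lt_def] at this; omega
    have hprod : ∏ i, hopMat n (((-1 : ℤˣ) ^ (k + 1 - 1) : ℤˣ) : ℤ) (y (σ i)) (x i) =
        (((-1 : ℤˣ) ^ k : ℤˣ) : ℤ) := by
      rw [Fin.prod_univ_succ, hopMat_of_adm hn (h 0), if_pos ⟨hx, hy⟩, Finset.prod_eq_one]
      · simp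
      · intro i _
        rw [hopMat_of_adm hn (h _), if_neg]
        intro hh
        exact hpos _ (Fin.succ_ne_zero i) hh.1
    have hmono : StrictMono (σ * finRotate (k + 1)) := by
      intro i j hij
      rw [← y.lt_iff_lt, Equiv.Perm.mul_apply, Equiv.Perm.mul_apply]
      have hne' : y (σ (finRotate (k+1) i)) ≠ y (σ (finRotate (k+1) j)) := by
        intro hh
        exact hij.ne ((finRotate (k+1)).injective (σ.injective (y.injective hh)))
      induction j using Fin.lastCases with
      | last =>
        rw [finRotate_last] at hne' ⊢
        have := (y (σ (finRotate (k+1) i))).2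
        rw [Fin.lt_def, hy]
        rw [Ne, Fin.ext_iff, hy] at hne'
        omega
      | cast j =>
        induction i using Fin.lastCases with
        | last => exact absurd hij (not_lt.mpr (Fin.le_last _))
        | cast i =>
          have e1 : ∀ i : Fin k, finRotate (k+1) i.castSucc = i.succ := by
            intro i; rw [finRotate_apply]; simp
          rw [e1, e1] at hne' ⊢
          refine adm_lt hne (h _) (h _) (x.strictMono (by simpa using hij)) hne' ?_
          intro hh
          exact hpos _ (Fin.succ_ne_zero i) hh.1
    have h1 := perm_eq_one_of_strictMono _ hmono
    have h2 : Equiv.Perm.sign σ = (-1) ^ k := by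
      have := congrArg Equiv.Perm.sign h1
      rw [Equiv.Perm.sign_mul, sign_finRotate, Equiv.Perm.sign_one, Nat.add_sub_cancel] at this
      calc Equiv.Perm.sign σ = Equiv.Perm.sign σ * ((-1) ^ k * (-1) ^ k) := by
            rw [← mul_pow]; simp
        _ = _ := by rw [← mul_assoc, this, one_mul]
    rw [hprod, h2]
    rw [zsmul_eq_mul, ← Int.cast_mul, ← Units.val_mul, ← mul_pow]
    simp
  · push Not at hw
    have hmono : StrictMono σ := by
      intro i j hij
      rw [← y.lt_iff_lt]
      refine adm_lt hne (h _) (h _) (x.strictMono hij) ?_ (fun hh => hw i hh.1 hh.2)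
      intro hh
      exact hij.ne (σ.injective (y.injective hh))
    rw [Finset.prod_eq_one, perm_eq_one_of_strictMono _ hmono]
    · simp
    · intro i _
      rw [hopMat_of_adm hn (h i), if_neg (fun hh => hw i hh.1 hh.2)]

/-- row condition -/
def rowCond (S S' h : Finset (Fin n)) : Prop :=
  ∀ j, Ex1 (j ∈ S) (j ∈ S') (j ∈ h) (prv j ∈ h)

open Classical in
/-- the row transfer matrix of the dimer model -/
noncomputable def tmat (n : ℕ) : Matrix (Finset (Fin n)) (Finset (Fin n)) ℂ := fun S S' =>
  ((Finset.univ.filter fun h : Finset (Fin n) => rowCond S S' h).card : ℂ)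

lemma rowCond_symm (S S' h : Finset (Fin n)) : rowCond S S' h ↔ rowCond S' S h := by
  unfold rowCond Ex1
  refine forall_congr' fun j => ?_
  tauto

/-- the flip of a set along a sublattice -/
def flipE (S : Finset (Fin n)) : Finset (Fin n) :=
  Finset.univ.filter fun j => (j ∈ S ↔ ¬ evn j)

/-- the flip of a set along the other sublattice -/
def flipO (S : Finset (Fin n)) : Finset (Fin n) :=
  Finset.univ.filter fun j => (j ∈ S ↔ evn j)

lemma flipE_flipE (S : Finset (Fin n)) : flipE (flipE S) = S := by
  ext j; simp [flipE]; tauto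

lemma flipO_flipO (S : Finset (Fin n)) : flipO (flipO S) = S := by
  ext j; simp [flipO]; tauto

lemma rowCond_flip (X Y h : Finset (Fin n)) :
    rowCond (flipE X) (flipO Y) h ↔ hopCond prv evn (· ∈ X) (· ∈ Y) (· ∈ h) := by
  unfold rowCond hopCond
  constructor
  · intro hh
    constructor
    · intro j hj
      simpa [flipE, flipO, hj] using hh j
    · intro j hj
      simpa [flipE, flipO, hj] using hh j
  · rintro ⟨h1, h2⟩ j
    by_cases hj : evn j
    · simpa [flipE, flipO, hj] using h1 j hj
    · simpa [flipE, flipO, hj] using h2 j hj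

lemma hop_card (hne : Even n) (hn : 4 ≤ n) {X Y h : Finset (Fin n)}
    (hc : hopCond prv evn (· ∈ X) (· ∈ Y) (· ∈ h)) : X.card = Y.card := by
  refine Finset.card_bij (fun j _ => hopMap nxt prv evn (· ∈ h) j) ?_ ?_ ?_
  · intro j hj
    exact hop_mapsTo nxt_prv prv_nxt (evn_nxt hne) (evn_prv hne) (nxt_ne_prv hn) hc hj
  · intro j hj j' hj' he
    exact hop_injOn nxt_prv prv_nxt (evn_nxt hne) (evn_prv hne) (nxt_ne_prv hn) hc hj hj' he
  · intro y hy
    obtain ⟨j, hj, h'⟩ :=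
      hop_surj nxt_prv prv_nxt (evn_nxt hne) (evn_prv hne) (nxt_ne_prv hn) hc hy
    exact ⟨j, hj, h'⟩

open Classical in
lemma card_hop_eq (hne : Even n) (hn : 4 ≤ n) {k : ℕ} (X Y : Set.powersetCard (Fin n) k) :
    (Finset.univ.filter fun h : Finset (Fin n) =>
      hopCond prv evn (· ∈ (X : Finset (Fin n))) (· ∈ (Y : Finset (Fin n))) (· ∈ h)).card =
    (Finset.univ.filter fun σ : Equiv.Perm (Fin k) =>
      ∀ i, adm (psEmb X i) (psEmb Y (σ i))).card := by
  have hrX : ∀ j, j ∈ (X : Finset (Fin n)) ↔ ∃ i, psEmb X i = j := by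
    intro j; rw [← Set.mem_range]; simp [psEmb]; rfl
  have hrY : ∀ j, j ∈ (Y : Finset (Fin n)) ↔ ∃ i, psEmb Y i = j := by
    intro j; rw [← Set.mem_range]; simp [psEmb]; rfl
  have hex : ∀ h : Finset (Fin n), hopCond prv evn (· ∈ (X : Finset (Fin n)))
      (· ∈ (Y : Finset (Fin n))) (· ∈ h) → ∃ σ : Equiv.Perm (Fin k), ∀ i,
      psEmb Y (σ i) = hopMap nxt prv evn (· ∈ h) (psEmb X i) := by
    intro h hc
    have : ∀ i, ∃ i', psEmb Y i' = hopMap nxt prv evn (· ∈ h) (psEmb X i) := by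
      intro i
      rw [← hrY]
      exact hop_mapsTo nxt_prv prv_nxt (evn_nxt hne) (evn_prv hne) (nxt_ne_prv hn) hc
        ((hrX _).mpr ⟨i, rfl⟩)
    choose f hf using this
    have hinj : Function.Injective f := by
      intro i i' hii
      apply (psEmb X).injective
      refine hop_injOn nxt_prv prv_nxt (evn_nxt hne) (evn_prv hne) (nxt_ne_prv hn) hc
        ((hrX _).mpr ⟨i, rfl⟩) ((hrX _).mpr ⟨i', rfl⟩) ?_
      rw [← hf, ← hf, hii]
    exact ⟨Equiv.ofBijective f (Finite.injective_iff_bijective.mp hinj), hf⟩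
  choose! F hF using hex
  refine Finset.card_bij (fun h _ => F h) ?_ ?_ ?_
  · intro h hh
    rw [Finset.mem_filter] at hh ⊢
    refine ⟨Finset.mem_univ _, fun i => ?_⟩
    rw [hF h hh.2 i]
    unfold hopMap adm
    grind
  · intro h hh h' hh' he
    rw [Finset.mem_filter] at hh hh'
    have hag : ∀ j, j ∈ (X : Finset (Fin n)) →
        hopMap nxt prv evn (· ∈ h) j = hopMap nxt prv evn (· ∈ h') j := by
      intro j hj
      obtain ⟨i, rfl⟩ := (hrX j).mp hj
      rw [← hF h hh.2 i, ← hF h' hh'.2 i, he]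
    ext j
    rw [hop_recover nxt_prv prv_nxt (evn_nxt hne) (evn_prv hne) (nxt_ne_prv hn) hh.2 j,
      hop_recover nxt_prv prv_nxt (evn_nxt hne) (evn_prv hne) (nxt_ne_prv hn) hh'.2 j]
    refine or_congr ?_ ?_
    · refine and_congr_right fun _ => and_congr_right fun hx => ?_
      rw [hag _ hx]
    · refine and_congr_right fun _ => and_congr_right fun hx => ?_
      rw [hag _ hx]
  · intro σ hσ
    rw [Finset.mem_filter] at hσ
    have hfe : ∃ f : Fin n → Fin n, ∀ i, f (psEmb X i) = psEmb Y (σ i) := by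
      refine ⟨Function.extend (psEmb X) (fun i => psEmb Y (σ i)) id, fun i => ?_⟩
      exact (psEmb X).injective.extend_apply _ _ i
    obtain ⟨f, hf⟩ := hfe
    have hcon := hop_construct (X := (· ∈ (X : Finset (Fin n)))) (Y := (· ∈ (Y : Finset (Fin n))))
      (f := f) nxt_prv prv_nxt (evn_nxt hne) (evn_prv hne) (nxt_ne_prv hn) ?_ ?_ ?_ ?_
    · obtain ⟨c1, c2⟩ := hcon
      let H : Finset (Fin n) := Finset.univ.filter fun j =>
        (evn j ∧ j ∈ (X : Finset (Fin n)) ∧ f j = nxt j) ∨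
          (¬ evn j ∧ nxt j ∈ (X : Finset (Fin n)) ∧ f (nxt j) = j)
      have hH : (fun j => j ∈ H) = fun j =>
        (evn j ∧ j ∈ (X : Finset (Fin n)) ∧ f j = nxt j) ∨
          (¬ evn j ∧ nxt j ∈ (X : Finset (Fin n)) ∧ f (nxt j) = j) := by
        funext j; simp [H]
      rw [← hH] at c1 c2
      refine ⟨H, by rw [Finset.mem_filter]; exact ⟨Finset.mem_univ _, c1⟩, ?_⟩
      ext i
      congr 1
      apply (psEmb Y).injective
      rw [hF H c1 i, c2 _ ((hrX _).mpr ⟨i, rfl⟩), hf]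
    · intro j hj
      obtain ⟨i, rfl⟩ := (hrX j).mp hj
      rw [hf]; exact (hrY _).mpr ⟨_, rfl⟩
    · intro j j' hj hj' he
      obtain ⟨i, rfl⟩ := (hrX j).mp hj
      obtain ⟨i', rfl⟩ := (hrX j').mp hj'
      rw [hf, hf] at he
      rw [σ.injective ((psEmb Y).injective he)]
    · intro y hy
      obtain ⟨i, rfl⟩ := (hrY y).mp hy
      refine ⟨psEmb X (σ.symm i), (hrX _).mpr ⟨_, rfl⟩, ?_⟩
      rw [hf]; simp
    · intro j hj
      obtain ⟨i, rfl⟩ := (hrX j).mp hj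
      rw [hf]; exact hσ.2 i

/-- boundary sign for `k` particles -/
noncomputable def bsgn (k : ℕ) : ℂ := (((-1 : ℤˣ) ^ (k - 1) : ℤˣ) : ℤ)

lemma tmat_flip_eq (hne : Even n) (hn : 4 ≤ n) {k : ℕ} (X Y : Set.powersetCard (Fin n) k) :
    tmat n (flipE X) (flipO Y) = cmpd k (hopMat n (bsgn k)) Y X := by
  classical
  unfold tmat
  simp only [rowCond_flip]
  rw [card_hop_eq hne hn X Y, cmpd, Matrix.det_apply, Finset.card_filter, Nat.cast_sum]
  refine Finset.sum_congr rfl fun σ _ => ?_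
  simp only [Matrix.submatrix_apply]
  split_ifs with h
  · have := sign_term hne hn _ _ σ h
    rw [Nat.cast_one, ← this]
    rfl
  · push Not at h
    obtain ⟨i, hi⟩ := h
    have hz : hopMat n (bsgn k) (psEmb Y (σ i)) (psEmb X i) = 0 := hopMat_of_not_adm hi
    rw [Finset.prod_eq_zero (Finset.mem_univ i) hz]
    simp

lemma tmat_flip_eq_zero (hne : Even n) (hn : 4 ≤ n) (X Y : Finset (Fin n)) (h : X.card ≠ Y.card) :
    tmat n (flipE X) (flipO Y) = 0 := by
  classical
  unfold tmat
  simp only [rowCond_flip]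
  rw [Finset.card_eq_zero.mpr]
  · simp
  · rw [Finset.filter_eq_empty_iff]
    intro H _ hc
    exact h (hop_card hne hn hc)

end Row


set_option linter.unusedSectionVars false
open Matrix

section Fourier

variable {n : ℕ}

/-- momenta -/
noncomputable def ang (n δ : ℕ) (r : ℕ) : ℝ := (2 * r + δ) * Real.pi / n

/-- one-particle energies -/
noncomputable def nrg (n δ : ℕ) (r : ℕ) : ℝ := Real.arsinh (Real.cos (ang n δ r))

/-- phases -/
noncomputable def phs (n δ : ℕ) (r : ℕ) : ℂ := Complex.exp (ang n δ r * Complex.I)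

/-- amplitude -/
noncomputable def amp (n δ : ℕ) (r : ℕ) : ℂ := (Real.exp (nrg n δ r) : ℝ)

lemma hopMat_row (hne : Even n) (hn : 4 ≤ n) (ε : ℂ) (b a : Fin n) :
    hopMat n ε b a = (if a = b then 1 else 0) + (if a = prv b then (if evn a then 1 else 0) else 0) +
      (if a = nxt b then (if evn a then (if a.val = 0 then ε else 1) else 0) else 0) := by
  have h1 : b = nxt a ↔ a = prv b :=
    ⟨fun h => by rw [h, prv_nxt], fun h => by rw [h, nxt_prv]⟩
  have h2 : b = prv a ↔ a = nxt b :=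
    ⟨fun h => by rw [h, nxt_prv], fun h => by rw [h, prv_nxt]⟩
  have h3 := nxt_ne_prv hn b
  have h4 := evn_nxt hne b
  have h5 := evn_prv hne b
  unfold hopMat
  simp only [h1, h2]
  have hc : (b = a) ↔ (a = b) := eq_comm
  simp only [hc]
  by_cases e1 : a = b
  · subst e1
    have t1 : a ≠ prv a := fun h => by rw [← h] at h5; tauto
    have t2 : a ≠ nxt a := fun h => by rw [← h] at h4; tauto
    rw [if_pos rfl, if_pos rfl, if_neg t1, if_neg t2]
    simp
  · rw [if_neg e1, if_neg e1]
    by_cases e2 : a = prv b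
    · have e3 : a ≠ nxt b := fun h => h3 (h ▸ e2)
      rw [if_pos e2, if_neg e3]
      by_cases he : evn a
      · rw [if_pos ⟨he, e2⟩, if_pos he]; simp
      · rw [if_neg (fun h => he h.1), if_neg (fun h => he h.1), if_neg he]; simp
    · rw [if_neg e2, if_neg (fun h => e2 h.2)]
      by_cases e3 : a = nxt b
      · rw [if_pos e3]
        by_cases he : evn a
        · rw [if_pos ⟨he, e3⟩, if_pos he]; simp
        · rw [if_neg (fun h => he h.1), if_neg he]; simp
      · rw [if_neg (fun h => e3 h.2), if_neg e3]; simp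

lemma hopMat_mulVec (hne : Even n) (hn : 4 ≤ n) (ε : ℂ) (f : Fin n → ℂ) (b : Fin n) :
    (hopMat n ε *ᵥ f) b = f b + (if evn b then 0 else f (prv b) +
      (if (nxt b).val = 0 then ε else 1) * f (nxt b)) := by
  have h4 := evn_nxt hne b
  have h5 := evn_prv hne b
  simp only [Matrix.mulVec, dotProduct, hopMat_row hne hn, add_mul, Finset.sum_add_distrib,
    ite_mul, zero_mul, one_mul, Finset.sum_ite_eq', Finset.mem_univ, if_true]
  by_cases he : evn b
  · simp [h4, h5, he]
  · simp [h4, h5, he, add_assoc]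

lemma hopMat_transpose_mulVec (hne : Even n) (hn : 4 ≤ n) (ε : ℂ) (f : Fin n → ℂ) (b : Fin n) :
    ((hopMat n ε)ᵀ *ᵥ f) b = f b + (if evn b then f (nxt b) +
      (if b.val = 0 then ε else 1) * f (prv b) else 0) := by
  have h1 : ∀ a, b = nxt a ↔ a = prv b := fun a =>
    ⟨fun h => by rw [h, prv_nxt], fun h => by rw [h, nxt_prv]⟩
  have h2 : ∀ a, b = prv a ↔ a = nxt b := fun a =>
    ⟨fun h => by rw [h, nxt_prv], fun h => by rw [h, prv_nxt]⟩
  simp only [Matrix.mulVec, dotProduct, hopMat_row hne hn, add_mul, Finset.sum_add_distrib,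
    ite_mul, zero_mul, one_mul, Matrix.transpose_apply, h1, h2, Finset.sum_ite_eq',
    Finset.sum_ite_eq, Finset.mem_univ, if_true]
  by_cases he : evn b
  · simp [he, add_assoc]
  · simp [he]

/-- eigenvector matrix -/
noncomputable def eigW (n δ : ℕ) : Matrix (Fin n) (Fin n) ℂ := fun j r =>
  phs n δ r ^ j.val * (if evn j then amp n δ r else 1)

lemma phs_ne_zero (δ r : ℕ) : phs n δ r ≠ 0 := Complex.exp_ne_zero _

lemma phs_pow (hn : 4 ≤ n) (δ r : ℕ) : phs n δ r ^ n = (-1) ^ δ := by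
  have : (n : ℂ) ≠ 0 := by norm_cast; omega
  rw [phs, ← Complex.exp_nat_mul, ang]
  push_cast
  have : (n : ℂ) * ((2 * r + δ) * Real.pi / n * Complex.I) =
      r * (2 * Real.pi * Complex.I) + δ * (Real.pi * Complex.I) := by
    field_simp
  rw [this, Complex.exp_add, Complex.exp_nat_mul_two_pi_mul_I, one_mul, Complex.exp_nat_mul,
    Complex.exp_pi_mul_I]

lemma amp_ne_zero (δ r : ℕ) : amp n δ r ≠ 0 := by
  rw [amp]; exact_mod_cast (Real.exp_pos _).ne'

lemma phs_add_inv (δ r : ℕ) : phs n δ r + (phs n δ r)⁻¹ = 2 * (Real.cos (ang n δ r) : ℝ) := by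
  rw [phs, ← Complex.exp_neg, Complex.ofReal_cos, Complex.cos]
  ring_nf

lemma amp_rel (δ r : ℕ) :
    amp n δ r ^ 2 = 1 + (phs n δ r + (phs n δ r)⁻¹) * amp n δ r := by
  have h : Real.exp (nrg n δ r) ^ 2 = 1 + 2 * Real.cos (ang n δ r) * Real.exp (nrg n δ r) := by
    have h1 : Real.sinh (nrg n δ r) = Real.cos (ang n δ r) := Real.sinh_arsinh _
    rw [Real.sinh_eq, Real.exp_neg] at h1
    have h2 := (Real.exp_pos (nrg n δ r)).ne'
    rw [← h1]
    field_simp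
    ring
  rw [phs_add_inv, amp]
  exact_mod_cast h

lemma eig_eq (hne : Even n) (hn : 4 ≤ n) (δ : ℕ) :
    (hopMat n ((-1) ^ δ))ᵀ * hopMat n ((-1) ^ δ) * eigW n δ =
      eigW n δ * Matrix.diagonal (fun r : Fin n => amp n δ r ^ 2) := by
  ext j r
  rw [Matrix.mul_diagonal]
  have hz := phs_ne_zero (n := n) δ r
  have hpow := phs_pow (n := n) hn δ r
  have hrel := amp_rel (n := n) δ r
  set z := phs n δ r with hzdef
  set μ := amp n δ r with hμ
  have hε : ((-1 : ℂ) ^ δ) * (-1) ^ δ = 1 := by rw [← mul_pow]; simp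
  set ε : ℂ := (-1) ^ δ
  obtain ⟨q, hq⟩ := hne
  have hne : Even n := ⟨q, hq⟩
  have e1 : ((hopMat n ε)ᵀ * hopMat n ε * eigW n δ) j r =
      ((hopMat n ε)ᵀ *ᵥ (hopMat n ε *ᵥ (fun j => eigW n δ j r))) j := by
    rw [Matrix.mulVec_mulVec]
    rfl
  have hA : hopMat n ε *ᵥ (fun j => eigW n δ j r) =
      fun j : Fin n => z ^ j.val * (if evn j then μ else μ ^ 2) := by
    funext b
    rw [hopMat_mulVec hne hn]
    have hb := b.2
    have h4 := evn_nxt hne b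
    have h5 := evn_prv hne b
    by_cases he : evn b
    · simp [he, eigW, hzdef, hμ]
    · have t1 : z ^ (prv b).val = z ^ b.val * z⁻¹ := by
        have : b.val = (prv b).val + 1 := by
          simp only [prv, evn] at *; split_ifs <;> omega
        rw [this, pow_succ]; field_simp
      have t2 : (if (nxt b).val = 0 then ε else 1) * z ^ (nxt b).val = z ^ b.val * z := by
        by_cases hl : b.val + 1 < n
        · simp [nxt, hl, pow_succ]
        · have : b.val + 1 = n := by omega
          simp only [nxt, hl, if_false, if_true, pow_zero, mul_one]
          rw [← hpow, ← pow_succ, this]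
      simp only [eigW, he, h4, h5, if_false, not_false_eq_true, if_true, ← hzdef, ← hμ]
      rw [← mul_assoc, t1, t2, hrel]
      ring
  rw [e1, hA, hopMat_transpose_mulVec hne hn]
  have hb := j.2
  have h4 := evn_nxt hne j
  have h5 := evn_prv hne j
  by_cases he : evn j
  · have t1 : z ^ (nxt j).val = z ^ j.val * z := by
      have : (nxt j).val = j.val + 1 := by
        simp only [nxt, evn] at *; split_ifs <;> omega
      rw [this, pow_succ]
    have t2 : (if j.val = 0 then ε else 1) * z ^ (prv j).val = z ^ j.val * z⁻¹ := by
      by_cases hl : j.val = 0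
      · have t3 : z ^ (n - 1) * z = ε := by
          rw [← pow_succ, ← hpow]; congr 1; omega
        simp only [prv, hl, if_true, pow_zero]
        field_simp
        rw [mul_assoc, t3, hε]
      · have : j.val = (prv j).val + 1 := by
          simp only [prv]; split_ifs; omega
        rw [if_neg hl, this, pow_succ]; field_simp
    simp only [eigW, he, h4, h5, if_false, if_true, ← hzdef, ← hμ, not_true_eq_false]
    rw [← mul_assoc, t1, t2]
    have : μ ^ 3 = μ + (z + z⁻¹) * μ ^ 2 := by linear_combination μ * hrel
    linear_combination (-z ^ j.val) * this
  · simp only [eigW, he, if_false, ← hzdef, ← hμ]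
    ring

lemma sum_alt (q a : ℂ) (h : ℕ) :
    ∑ j ∈ Finset.range (h + h), q ^ j * (if j % 2 = 0 then a else 1) =
      (a + q) * ∑ l ∈ Finset.range h, (q ^ 2) ^ l := by
  induction h with
  | zero => simp
  | succ h ih =>
    rw [show h + 1 + (h + 1) = (h + h) + 1 + 1 by ring, Finset.sum_range_succ,
      Finset.sum_range_succ, ih, Finset.sum_range_succ]
    rw [if_pos (by omega), if_neg (by omega)]
    rw [← pow_mul]
    ring

lemma phs_inj (hn : 4 ≤ n) (δ : ℕ) {r s : Fin n} (h : phs n δ r = phs n δ s) : r = s := by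
  have hn0 : (n : ℂ) ≠ 0 := by norm_cast; omega
  have key : ∀ r : ℕ, phs n δ r = Complex.exp (δ * Real.pi / n * Complex.I) *
      Complex.exp (2 * Real.pi * Complex.I / n) ^ r := by
    intro r
    rw [phs, ← Complex.exp_nat_mul, ← Complex.exp_add, ang]
    congr 1
    push_cast
    field_simp
    ring
  rw [key, key] at h
  have h' := mul_left_cancel₀ (Complex.exp_ne_zero _) h
  exact Fin.ext ((Complex.isPrimitiveRoot_exp n (by omega)).pow_inj r.2 s.2 h')

lemma amp_neg (δ : ℕ) {r s : ℕ} (h : phs n δ s = - phs n δ r) : amp n δ r * amp n δ s = 1 := by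
  have h1 : (2 * (Real.cos (ang n δ s) : ℝ) : ℂ) = - (2 * (Real.cos (ang n δ r) : ℝ)) := by
    rw [← phs_add_inv, ← phs_add_inv, h, inv_neg]; ring
  have h2 : Real.cos (ang n δ s) = - Real.cos (ang n δ r) := by
    have : 2 * Real.cos (ang n δ s) = - (2 * Real.cos (ang n δ r)) := by exact_mod_cast h1
    linarith
  rw [amp, amp, ← Complex.ofReal_mul, ← Real.exp_add, nrg, nrg, h2, Real.arsinh_neg]
  simp

lemma eigW_det (hne : Even n) (hn : 4 ≤ n) (δ : ℕ) : IsUnit (eigW n δ).det := by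
  obtain ⟨h, hh⟩ := hne
  let V : Matrix (Fin n) (Fin n) ℂ := fun r j =>
    (phs n δ r)⁻¹ ^ j.val * (if evn j then amp n δ r else 1)
  have hVW : V * eigW n δ = Matrix.diagonal (fun r : Fin n => (amp n δ r ^ 2 + 1) * h) := by
    ext r s
    have hr := phs_ne_zero (n := n) δ r
    set q : ℂ := (phs n δ r)⁻¹ * phs n δ s with hq
    have e1 : (V * eigW n δ) r s =
        (amp n δ r * amp n δ s + q) * ∑ l ∈ Finset.range h, (q ^ 2) ^ l := by
      rw [← sum_alt, ← hh, ← Fin.sum_univ_eq_sum_range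
        (fun j => q ^ j * (if j % 2 = 0 then amp n δ r * amp n δ s else 1))]
      rw [Matrix.mul_apply]
      refine Finset.sum_congr rfl fun j _ => ?_
      by_cases hj : j.val % 2 = 0
      · have hj' : evn j := hj
        simp only [V, eigW, hj, hj', if_true, hq, mul_pow]
        ring
      · have hj' : ¬ evn j := hj
        simp only [V, eigW, hj, hj', if_false, hq, mul_pow]
        ring
    rw [e1, Matrix.diagonal_apply]
    by_cases hrs : r = s
    · subst hrs
      have : q = 1 := by rw [hq]; field_simp
      simp [this, pow_two]
    · rw [if_neg hrs]
      by_cases hq2 : q ^ 2 = 1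
      · rcases sq_eq_sq_iff_eq_or_eq_neg.mp (hq2.trans (one_pow 2).symm) with h1 | h1
        · exfalso
          apply hrs
          apply phs_inj hn δ
          rw [hq] at h1
          field_simp at h1
          exact h1.symm
        · have : phs n δ s = - phs n δ r := by
            rw [hq] at h1
            field_simp at h1
            exact h1
          rw [amp_neg δ this, h1]; simp
      · have h0 : (q ^ 2) ^ h = 1 := by
          rw [← pow_mul, show 2 * h = n by omega, hq, mul_pow, inv_pow, phs_pow hn, phs_pow hn]
          exact inv_mul_cancel₀ (pow_ne_zero _ (by norm_num))
        rw [geom_sum_eq hq2, h0]; simp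
  have hd := congrArg Matrix.det hVW
  rw [Matrix.det_mul, Matrix.det_diagonal] at hd
  rw [isUnit_iff_ne_zero]
  intro h0
  rw [h0, mul_zero] at hd
  refine absurd hd.symm (Finset.prod_ne_zero_iff.mpr fun r _ => ?_)
  refine mul_ne_zero ?_ (by norm_cast; omega)
  rw [amp]
  have : Real.exp (nrg n δ r) ^ 2 + 1 ≠ 0 := by positivity
  exact_mod_cast this

end Fourier


set_option linter.unusedSectionVars false
open Matrix

section TraceFormula

variable {n : ℕ}

lemma submatrix_equiv_pow {α β R : Type*} [Fintype α] [Fintype β] [DecidableEq α] [DecidableEq β]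
    [CommRing R] (T : Matrix α α R) (e : β ≃ α) (p : ℕ) :
    (T ^ p).submatrix e e = (T.submatrix e e) ^ p := by
  induction p with
  | zero => simp
  | succ p ih => rw [pow_succ, pow_succ, ← ih, Matrix.submatrix_mul_equiv]

lemma trace_submatrix_equiv' {α β R : Type*} [Fintype α] [Fintype β]
    [CommRing R] (T : Matrix α α R) (e : β ≃ α) :
    (T.submatrix e e).trace = T.trace := by
  simp only [Matrix.trace, Matrix.diag, Matrix.submatrix_apply]
  exact e.sum_comp (fun i => T i i)

/-- subsets by size -/
def psSigma (n : ℕ) : (Σ k : Fin (n + 1), Set.powersetCard (Fin n) k) ≃ Finset (Fin n) where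
  toFun x := x.2.1
  invFun s := ⟨⟨s.card, by have := s.card_le_univ; simp at this; omega⟩, ⟨s, rfl⟩⟩
  left_inv := by
    rintro ⟨⟨k, hk⟩, s, hs⟩
    have : s.card = k := hs
    subst this
    rfl
  right_inv s := rfl

/-- flip equivalences -/
def flipEEquiv (n : ℕ) : Finset (Fin n) ≃ Finset (Fin n) :=
  ⟨flipE, flipE, flipE_flipE, flipE_flipE⟩

/-- flip equivalences -/
def flipOEquiv (n : ℕ) : Finset (Fin n) ≃ Finset (Fin n) :=
  ⟨flipO, flipO, flipO_flipO, flipO_flipO⟩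

lemma tmat_transpose : (tmat n)ᵀ = tmat n := by
  ext S S'
  simp only [Matrix.transpose_apply, tmat]
  congr 2
  ext h
  simp only [Finset.mem_filter, rowCond_symm S' S]

lemma tmat_block (hne : Even n) (hn : 4 ≤ n) :
    (tmat n).submatrix ((psSigma n).trans (flipEEquiv n)) ((psSigma n).trans (flipOEquiv n)) =
      Matrix.blockDiagonal' (fun k : Fin (n + 1) => (cmpd (k : ℕ) (hopMat n (bsgn k)))ᵀ) := by
  ext ⟨k, X⟩ ⟨l, Y⟩
  rw [Matrix.blockDiagonal'_apply]
  by_cases h : k = l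
  · subst h
    rw [dif_pos rfl]
    exact tmat_flip_eq hne hn X Y
  · rw [dif_neg h]
    refine tmat_flip_eq_zero hne hn _ _ ?_
    intro h'
    apply h
    have h1 : (X : Finset (Fin n)).card = k := Set.powersetCard.card_eq X
    have h2 : (Y : Finset (Fin n)).card = l := Set.powersetCard.card_eq Y
    exact Fin.ext (h1.symm.trans (h'.trans h2))

lemma trace_tmat_pow (hne : Even n) (hn : 4 ≤ n) (p : ℕ) :
    (tmat n ^ (2 * p)).trace = ∑ k : Fin (n + 1),
      (cmpd (k : ℕ) ((hopMat n (bsgn k))ᵀ * hopMat n (bsgn k)) ^ p).trace := by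
  have h1 := tmat_block hne hn
  have h2 := congrArg Matrix.transpose h1
  rw [Matrix.transpose_submatrix, tmat_transpose, Matrix.blockDiagonal'_transpose] at h2
  have h3 : (tmat n * tmat n).submatrix ((psSigma n).trans (flipEEquiv n))
      ((psSigma n).trans (flipEEquiv n)) = Matrix.blockDiagonal' (fun k : Fin (n + 1) =>
        cmpd (k : ℕ) ((hopMat n (bsgn k))ᵀ * hopMat n (bsgn k))) := by
    rw [← Matrix.submatrix_mul_equiv _ _ _ ((psSigma n).trans (flipOEquiv n)), h1, h2,
      ← Matrix.blockDiagonal'_mul]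
    congr 1
    funext k
    rw [cmpd_mul, cmpd_transpose, Matrix.transpose_transpose]
  rw [pow_mul, pow_two, ← trace_submatrix_equiv' _ ((psSigma n).trans (flipEEquiv n)),
    submatrix_equiv_pow, h3, ← Matrix.blockDiagonal'_pow, Matrix.trace_blockDiagonal']
  rfl

/-- momentum shift in sector `k` -/
def dlt (k : ℕ) : ℕ := (k - 1) % 2

lemma bsgn_eq (k : ℕ) : bsgn k = (-1) ^ dlt k := by
  rw [bsgn, dlt]
  push_cast
  rw [neg_one_pow_eq_pow_mod_two]

/-- exact formula -/
noncomputable def zForm (n m : ℕ) : ℝ := ∑ k : Fin (n + 1), ∑ s : Set.powersetCard (Fin n) (k : ℕ),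
    ∏ r ∈ (s : Finset (Fin n)), Real.exp (m * nrg n (dlt k) r)

lemma trace_tmat_eq (hne : Even n) (hn : 4 ≤ n) {m : ℕ} (hm : Even m) :
    (tmat n ^ m).trace = (zForm n m : ℝ) := by
  obtain ⟨p, hp⟩ := hm
  rw [hp, ← two_mul, trace_tmat_pow hne hn, zForm]
  rw [Complex.ofReal_sum]
  refine Finset.sum_congr rfl fun k _ => ?_
  rw [bsgn_eq, trace_cmpd_of_diagonalize _ _ _ _ (eigW_det hne hn (dlt k)) (eig_eq hne hn (dlt k)),
    Complex.ofReal_sum]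
  refine Finset.sum_congr rfl fun s _ => ?_
  rw [Complex.ofReal_prod]
  refine Finset.prod_congr rfl fun r _ => ?_
  rw [← pow_mul, amp, ← Complex.ofReal_pow, ← Real.exp_nat_mul]

end TraceFormula


set_option linter.unusedSectionVars false
open Matrix

section Torus

variable {m n : ℕ}

/-- edges of the torus -/
def tEdge (m n : ℕ) : (ZMod m × ZMod n) ⊕ (ZMod m × ZMod n) → Sym2 (ZMod m × ZMod n)
  | Sum.inl v => s(v, v + (0, 1))
  | Sum.inr v => s(v, v + (1, 0))

lemma zmod_one_ne (hm : 3 ≤ m) : (1 : ZMod m) ≠ 0 := by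
  have : Fact (1 < m) := ⟨by omega⟩
  exact one_ne_zero

lemma zmod_two_ne (hm : 3 ≤ m) : (1 + 1 : ZMod m) ≠ 0 := by
  intro h
  have : ((2 : ℕ) : ZMod m) = 0 := by push_cast; rw [← h]; norm_num
  rw [ZMod.natCast_eq_zero_iff] at this
  have := Nat.le_of_dvd (by norm_num) this
  omega

lemma tEdge_mem (hm : 3 ≤ m) (hn : 3 ≤ n) (x) : tEdge m n x ∈ (torusGridGraph m n).edgeSet := by
  have h1 := zmod_one_ne hm
  have h2 := zmod_one_ne hn
  rcases x with v | v
  · simp [tEdge, torusGridGraph, Prod.ext_iff, h2]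
  · simp [tEdge, torusGridGraph, Prod.ext_iff, h1]

lemma tEdge_surj {e} (he : e ∈ (torusGridGraph m n).edgeSet) : ∃ x, tEdge m n x = e := by
  induction e using Sym2.ind with
  | _ u v =>
    rw [SimpleGraph.mem_edgeSet, torusGridGraph, SimpleGraph.fromRel_adj] at he
    rcases he.2 with (h | h) | (h | h)
    · exact ⟨Sum.inr u, by rw [h]; rfl⟩
    · exact ⟨Sum.inl u, by rw [h]; rfl⟩
    · exact ⟨Sum.inr v, by rw [h, Sym2.eq_swap]; rfl⟩
    · exact ⟨Sum.inl v, by rw [h, Sym2.eq_swap]; rfl⟩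

lemma tEdge_inj (hm : 3 ≤ m) (hn : 3 ≤ n) : Function.Injective (tEdge m n) := by
  have h1 := zmod_one_ne hm
  have h2 := zmod_one_ne hn
  have h3 := zmod_two_ne hm
  have h4 := zmod_two_ne hn
  rintro (⟨a, b⟩ | ⟨a, b⟩) (⟨c, d⟩ | ⟨c, d⟩) h <;>
    simp only [tEdge, Sym2.eq_iff, Prod.mk_add_mk, Prod.mk.injEq, add_zero] at h
  · rcases h with h | ⟨⟨h5, h6⟩, h7, h8⟩
    · rw [h.1.1, h.1.2]
    · exact absurd (by linear_combination h8 - h6) h4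
  · exfalso
    rcases h with ⟨⟨h5, h6⟩, h7, h8⟩ | ⟨⟨h5, h6⟩, h7, h8⟩
    · exact h2 (by linear_combination h8 - h6)
    · exact h2 (by linear_combination h8 - h6)
  · exfalso
    rcases h with ⟨⟨h5, h6⟩, h7, h8⟩ | ⟨⟨h5, h6⟩, h7, h8⟩
    · exact h2 (by linear_combination h6 - h8)
    · exact h2 (by linear_combination h8 - h6)
  · rcases h with h | ⟨⟨h5, h6⟩, h7, h8⟩
    · rw [h.1.1, h.1.2]
    · exact absurd (by linear_combination h7 - h5) h3

/-- local matching condition -/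
def tCond (A : Finset ((ZMod m × ZMod n) ⊕ (ZMod m × ZMod n))) : Prop :=
  ∀ i j, Ex1 (Sum.inr (i - 1, j) ∈ A) (Sum.inr (i, j) ∈ A) (Sum.inl (i, j) ∈ A)
    (Sum.inl (i, j - 1) ∈ A)

lemma tEdge_incident (i : ZMod m) (j : ZMod n) (x) : (i, j) ∈ tEdge m n x ↔
    x = Sum.inr (i - 1, j) ∨ x = Sum.inr (i, j) ∨ x = Sum.inl (i, j) ∨ x = Sum.inl (i, j - 1) := by
  rcases x with ⟨a, b⟩ | ⟨a, b⟩
  · simp [tEdge, Prod.ext_iff, eq_sub_iff_add_eq, eq_comm]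
  · simp [tEdge, Prod.ext_iff, eq_sub_iff_add_eq, eq_comm, or_comm]

lemma existsUnique_four {α : Type*} (A : Finset α) (a b c d : α) (hab : a ≠ b) (hac : a ≠ c)
    (had : a ≠ d) (hbc : b ≠ c) (hbd : b ≠ d) (hcd : c ≠ d) :
    (∃! x, x ∈ A ∧ (x = a ∨ x = b ∨ x = c ∨ x = d)) ↔ Ex1 (a ∈ A) (b ∈ A) (c ∈ A) (d ∈ A) := by
  unfold Ex1
  constructor
  · rintro ⟨x, ⟨hx, h⟩, hu⟩
    have ha : a ∈ A → a = x := fun h => hu a ⟨h, by tauto⟩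
    have hb : b ∈ A → b = x := fun h => hu b ⟨h, by tauto⟩
    have hc : c ∈ A → c = x := fun h => hu c ⟨h, by tauto⟩
    have hd : d ∈ A → d = x := fun h => hu d ⟨h, by tauto⟩
    rcases h with rfl | rfl | rfl | rfl <;> grind
  · intro h
    unfold ExistsUnique
    grind

lemma matching_iff (hm : 3 ≤ m) (hn : 3 ≤ n) (A : Finset ((ZMod m × ZMod n) ⊕ (ZMod m × ZMod n))) :
    IsPerfectMatchingSet (torusGridGraph m n) (A.map ⟨tEdge m n, tEdge_inj hm hn⟩) ↔ tCond A := by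
  have h1 := zmod_one_ne hm
  have h2 := zmod_one_ne hn
  unfold IsPerfectMatchingSet
  rw [and_iff_right]
  · unfold tCond
    rw [Prod.forall]
    refine forall_congr' fun i => forall_congr' fun j => ?_
    rw [← existsUnique_four A]
    · constructor
      · rintro ⟨e, ⟨he, hv⟩, hu⟩
        obtain ⟨x, hx, rfl⟩ := Finset.mem_map.mp he
        refine ⟨x, ⟨hx, (tEdge_incident _ _ _).mp hv⟩, fun y hy => ?_⟩
        refine tEdge_inj hm hn (hu (tEdge m n y) ⟨?_, (tEdge_incident _ _ _).mpr hy.2⟩)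
        exact Finset.mem_map.mpr ⟨y, hy.1, rfl⟩
      · rintro ⟨x, ⟨hx, hv⟩, hu⟩
        refine ⟨tEdge m n x, ⟨Finset.mem_map.mpr ⟨x, hx, rfl⟩, (tEdge_incident _ _ _).mpr hv⟩, ?_⟩
        rintro e ⟨he, hv'⟩
        obtain ⟨y, hy, rfl⟩ := Finset.mem_map.mp he
        rw [hu y ⟨hy, (tEdge_incident _ _ _).mp hv'⟩]
        rfl
    all_goals simp [h1, h2, eq_sub_iff_add_eq]
  · intro e he
    obtain ⟨x, hx, rfl⟩ := Finset.mem_map.mp he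
    exact tEdge_mem hm hn x

lemma card_matching (hm : 3 ≤ m) (hn : 3 ≤ n) :
    numPerfectMatchings (torusGridGraph m n) =
      Nat.card {A : Finset ((ZMod m × ZMod n) ⊕ (ZMod m × ZMod n)) // tCond A} := by
  classical
  symm
  refine Nat.card_eq_of_bijective
    (fun A => ⟨A.1.map ⟨tEdge m n, tEdge_inj hm hn⟩, (matching_iff hm hn A.1).mpr A.2⟩) ⟨?_, ?_⟩
  · rintro ⟨A, hA⟩ ⟨B, hB⟩ h
    simp only [Subtype.mk.injEq] at h ⊢
    exact Finset.map_injective _ h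
  · rintro ⟨M, hM⟩
    have hM' : (M.preimage (tEdge m n) (tEdge_inj hm hn).injOn).map
        ⟨tEdge m n, tEdge_inj hm hn⟩ = M := by
      ext e
      simp only [Finset.mem_map, Finset.mem_preimage, Function.Embedding.coeFn_mk]
      constructor
      · rintro ⟨x, hx, rfl⟩; exact hx
      · intro he
        obtain ⟨x, rfl⟩ := tEdge_surj (hM.1 e he)
        exact ⟨x, he, rfl⟩
    refine ⟨⟨M.preimage (tEdge m n) (tEdge_inj hm hn).injOn, ?_⟩, ?_⟩
    · rw [← matching_iff hm hn, hM']; exact hM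
    · simp only [hM']

lemma prv_eq (n : ℕ) (j : Fin (n + 1)) : prv j = j - 1 := by
  rw [eq_sub_iff_add_eq]
  have h : ∀ i : Fin (n + 1), i + 1 = nxt i := by
    intro i
    ext
    simp only [nxt]
    rw [Fin.val_add_one]
    have := i.2
    simp only [Fin.ext_iff, Fin.val_last]
    split_ifs <;> omega
  rw [h, nxt_prv]

/-- local matching condition -/
def fCond {m n : ℕ}
    (A : Finset ((Fin (m + 1) × Fin (n + 1)) ⊕ (Fin (m + 1) × Fin (n + 1)))) : Prop :=
  ∀ i j, Ex1 (Sum.inr (i - 1, j) ∈ A) (Sum.inr (i, j) ∈ A) (Sum.inl (i, j) ∈ A)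
    (Sum.inl (i, j - 1) ∈ A)

/-- the matchings as row data -/
def tEquiv (m n : ℕ) :
    {A : Finset ((Fin (m + 1) × Fin (n + 1)) ⊕ (Fin (m + 1) × Fin (n + 1))) // fCond A} ≃
    Σ S : Fin (m + 1) → Finset (Fin (n + 1)), ∀ i, {h : Finset (Fin (n + 1)) //
      rowCond (S i) (S (i + 1)) h} where
  toFun A := ⟨fun i => Finset.univ.filter fun j => Sum.inr (i - 1, j) ∈ A.1,
    fun i => ⟨Finset.univ.filter fun j => Sum.inl (i, j) ∈ A.1, by
        intro j
        have := A.2 i j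
        simp only [Finset.mem_filter, Finset.mem_univ, true_and, prv_eq, add_sub_cancel_right]
        exact this⟩⟩
  invFun x := ⟨(Finset.univ.filter fun v => v.2 ∈ (x.2 v.1).1).disjSum
      (Finset.univ.filter fun v => v.2 ∈ x.1 (v.1 + 1)), by
        intro i j
        have := (x.2 i).2 j
        simp only [Finset.inl_mem_disjSum, Finset.inr_mem_disjSum, Finset.mem_filter,
          Finset.mem_univ, true_and, sub_add_cancel]
        rw [prv_eq] at this
        exact this⟩
  left_inv := by
    rintro ⟨A, hA⟩
    apply Subtype.ext
    ext (v | v) <;> simp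
  right_inv := by
    rintro ⟨S, h⟩
    refine Sigma.ext_iff.mpr ⟨?_, ?_⟩
    · funext i
      ext j
      simp
    · simp only
      apply Function.hfunext rfl
      intro i i' hi
      obtain rfl := eq_of_heq hi
      have e : ∀ S' : Fin (m + 1) → Finset (Fin (n + 1)), S' = S →
          ∀ (a : {h // rowCond (S' i) (S' (i + 1)) h}) (b : {h // rowCond (S i) (S (i + 1)) h}),
          a.1 = b.1 → HEq a b := by
        rintro _ rfl a b hab
        exact heq_of_eq (Subtype.ext hab)
      apply e
      · funext i
        ext j
        simp
      · ext j
        simp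

lemma numPM_eq_trace (hm : 3 ≤ m) (hn : 3 ≤ n) :
    (numPerfectMatchings (torusGridGraph m n) : ℂ) = (tmat n ^ m).trace := by
  classical
  obtain ⟨m, rfl⟩ : ∃ m', m = m' + 1 := ⟨m - 1, by omega⟩
  obtain ⟨n, rfl⟩ : ∃ n', n = n' + 1 := ⟨n - 1, by omega⟩
  have h1 : numPerfectMatchings (torusGridGraph (m + 1) (n + 1)) = _ :=
    (card_matching hm hn).trans (Nat.card_congr (tEquiv m n))
  rw [h1, trace_pow_walk, Nat.card_sigma]
  push_cast
  refine Finset.sum_congr rfl fun S _ => ?_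
  rw [Nat.card_pi]
  push_cast
  refine Finset.prod_congr rfl fun i _ => ?_
  rw [tmat, Nat.card_eq_fintype_card, Fintype.card_subtype]

lemma numPM_eq (hm : 4 ≤ m) (hn : 4 ≤ n) (hme : Even m) (hne : Even n) :
    (numPerfectMatchings (torusGridGraph m n) : ℝ) = zForm n m := by
  have h := (numPM_eq_trace (m := m) (n := n) (by omega) (by omega)).trans
    (trace_tmat_eq hne hn hme)
  exact_mod_cast h

end Torus


section Bounds

variable {n : ℕ}

lemma nrg_add_half {h : ℕ} (hh : 0 < h) (δ r : ℕ) :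
    nrg (h + h) δ (r + h) = - nrg (h + h) δ r := by
  have h0 : (h : ℝ) ≠ 0 := by positivity
  have : ang (h + h) δ (r + h) = ang (h + h) δ r + Real.pi := by
    simp only [ang]
    push_cast
    field_simp
    ring
  rw [nrg, nrg, this, Real.cos_add_pi, Real.arsinh_neg]

lemma sum_nrg {h : ℕ} (hh : 0 < h) (δ : ℕ) :
    ∑ r ∈ Finset.range (h + h), nrg (h + h) δ r = 0 := by
  rw [Finset.sum_range_add, ← Finset.sum_add_distrib]
  refine Finset.sum_eq_zero fun r _ => ?_
  rw [add_comm h r, nrg_add_half hh]; ring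

lemma sum_abs_nrg {h : ℕ} (hh : 0 < h) (δ : ℕ) :
    ∑ r ∈ Finset.range (h + h), |nrg (h + h) δ r| =
      2 * ∑ r ∈ Finset.range h, |nrg (h + h) δ r| := by
  rw [Finset.sum_range_add, two_mul]
  congr 1
  refine Finset.sum_congr rfl fun r _ => ?_
  rw [add_comm h r, nrg_add_half hh, abs_neg]

/-- total absolute energy -/
noncomputable def absSum (n δ : ℕ) : ℝ := ∑ r ∈ Finset.range n, |nrg n δ r|

lemma one_add_exp_le (m : ℕ) (a : ℝ) :
    1 + Real.exp (m * a) ≤ 2 * Real.exp (m / 2 * (a + |a|)) := by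
  have hm : (0 : ℝ) ≤ m := by positivity
  rcases le_total 0 a with h | h
  · rw [abs_of_nonneg h]
    have h1 : (m : ℝ) / 2 * (a + a) = m * a := by ring
    have : 1 ≤ Real.exp (m * a) := Real.one_le_exp (by positivity)
    rw [h1]; linarith
  · rw [abs_of_nonpos h]
    have : Real.exp (m * a) ≤ 1 := Real.exp_le_one_iff.mpr (mul_nonpos_of_nonneg_of_nonpos hm h)
    simp; linarith

lemma prod_le {h : ℕ} (hh : 0 < h) (δ m : ℕ) :
    ∏ r : Fin (h + h), (1 + Real.exp (m * nrg (h + h) δ r)) ≤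
      2 ^ (h + h) * Real.exp (m / 2 * absSum (h + h) δ) := by
  calc ∏ r : Fin (h + h), (1 + Real.exp (m * nrg (h + h) δ r))
      ≤ ∏ r : Fin (h + h), (2 * Real.exp (m / 2 * (nrg (h + h) δ r + |nrg (h + h) δ r|))) :=
        Finset.prod_le_prod (fun _ _ => by positivity) (fun r _ => one_add_exp_le m _)
    _ = 2 ^ (h + h) * Real.exp (m / 2 * absSum (h + h) δ) := by
        rw [Finset.prod_mul_distrib, ← Real.exp_sum, ← Finset.mul_sum,
          Fin.sum_univ_eq_sum_range (fun r => nrg (h + h) δ r + |nrg (h + h) δ r|),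
          Finset.sum_add_distrib, sum_nrg hh, zero_add, absSum]
        simp

lemma zForm_le {h : ℕ} (hh : 0 < h) (m : ℕ) {B : ℝ} (hB : ∀ δ < 2, absSum (h + h) δ ≤ B) :
    zForm (h + h) m ≤ 2 * (2 ^ (h + h) * Real.exp (m / 2 * B)) := by
  set n := h + h with hn
  let F : ℕ → Finset (Fin n) → ℝ := fun δ s => ∏ r ∈ s, Real.exp (m * nrg n δ r)
  have hF : ∀ δ s, 0 ≤ F δ s := fun δ s => Finset.prod_nonneg fun _ _ => (Real.exp_pos _).le
  have h1 : zForm n m ≤ ∑ δ ∈ Finset.range 2, ∑ s : Finset (Fin n), F δ s := by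
    have h2 : ∀ δ, ∑ s : Finset (Fin n), F δ s =
        ∑ k : Fin (n + 1), ∑ s : Set.powersetCard (Fin n) (k : ℕ), F δ s := by
      intro δ
      rw [← (psSigma n).sum_comp, Fintype.sum_sigma]
      rfl
    simp only [h2]
    rw [Finset.sum_comm, zForm]
    refine Finset.sum_le_sum fun k _ => ?_
    exact Finset.single_le_sum (f := fun δ => ∑ s : Set.powersetCard (Fin n) (k : ℕ), F δ s)
      (fun δ _ => Finset.sum_nonneg fun s _ => hF _ _)
      (Finset.mem_range.mpr (Nat.mod_lt _ (by norm_num)))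
  refine h1.trans ?_
  have h3 : ∀ δ ∈ Finset.range 2, ∑ s : Finset (Fin n), F δ s ≤ 2 ^ n * Real.exp (m / 2 * B) := by
    intro δ hδ
    have : ∑ s : Finset (Fin n), F δ s = ∏ r : Fin n, (1 + Real.exp (m * nrg n δ r)) := by
      rw [Finset.prod_one_add, Finset.powerset_univ]
    rw [this]
    refine (prod_le hh δ m).trans ?_
    have := hB δ (Finset.mem_range.mp hδ)
    gcongr
  refine (Finset.sum_le_sum h3).trans ?_
  simp

lemma le_zForm {h : ℕ} (hh : 0 < h) (m : ℕ) :
    Real.exp (m / 2 * absSum (h + h) (dlt h)) ≤ zForm (h + h) m := by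
  set δ := dlt h with hδ
  let g0 : Fin h → Fin (h + h) := fun r =>
    ⟨if 0 ≤ nrg (h + h) δ r then r else r + h, by have := r.2; split_ifs <;> omega⟩
  have hg : Function.Injective g0 := by
    intro r s hrs
    have := r.2
    have := s.2
    simp only [g0, Fin.mk.injEq] at hrs
    ext
    split_ifs at hrs <;> omega
  let s : Finset (Fin (h + h)) := Finset.univ.map ⟨g0, hg⟩
  have hs : s.card = h := by simp [s]
  have hval : ∏ r ∈ s, Real.exp (m * nrg (h + h) δ r) =
      Real.exp (m / 2 * absSum (h + h) δ) := by
    rw [Finset.prod_map, ← Real.exp_sum, ← Finset.mul_sum, absSum, sum_abs_nrg hh,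
      ← Fin.sum_univ_eq_sum_range (fun r => |nrg (h + h) δ r|)]
    have : ∀ r : Fin h, nrg (h + h) δ (g0 r).val = |nrg (h + h) δ r| := by
      intro r
      simp only [g0]
      split_ifs with h1
      · rw [abs_of_nonneg h1]
      · rw [nrg_add_half hh, abs_of_neg (not_le.mp h1)]
    simp only [Function.Embedding.coeFn_mk, this]
    congr 1
    ring
  rw [← hval, zForm]
  have hpos : ∀ (k : Fin (h + h + 1)) (s : Set.powersetCard (Fin (h + h)) (k : ℕ)),
      0 ≤ ∏ r ∈ (s : Finset (Fin (h + h))), Real.exp (m * nrg (h + h) (dlt k) r) :=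
    fun k s => Finset.prod_nonneg fun _ _ => (Real.exp_pos _).le
  refine le_trans ?_ (Finset.single_le_sum (f := fun k : Fin (h + h + 1) =>
    ∑ s : Set.powersetCard (Fin (h + h)) (k : ℕ),
      ∏ r ∈ (s : Finset (Fin (h + h))), Real.exp (m * nrg (h + h) (dlt k) r))
    (fun k _ => Finset.sum_nonneg fun s _ => hpos k s)
    (Finset.mem_univ (⟨h, by omega⟩ : Fin (h + h + 1))))
  exact Finset.single_le_sum (f := fun s : Set.powersetCard (Fin (h + h)) h =>
    ∏ r ∈ (s : Finset (Fin (h + h))), Real.exp (m * nrg (h + h) (dlt h) r))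
    (fun t _ => hpos ⟨h, by omega⟩ t) (Finset.mem_univ (⟨s, hs⟩ : Set.powersetCard (Fin (h + h)) h))

end Bounds


section Catalan

open MeasureTheory intervalIntegral

lemma arsinh_eq_integral (c : ℝ) :
    Real.arsinh c = ∫ t in (0 : ℝ)..1, c / √(1 + (t * c) ^ 2) := by
  have h : ∀ t ∈ Set.uIcc (0 : ℝ) 1, HasDerivAt (fun t => Real.arsinh (t * c))
      (c / √(1 + (t * c) ^ 2)) t := by
    intro t _
    have := (((hasDerivAt_id t).mul_const c)).arsinh
    refine this.congr_deriv ?_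
    simp [div_eq_inv_mul]
  rw [integral_eq_sub_of_hasDerivAt h]
  · simp
  · apply Continuous.intervalIntegrable
    refine Continuous.div (by fun_prop) (by fun_prop) fun t => ?_
    have : 0 < 1 + (t * c) ^ 2 := by positivity
    positivity

lemma inner_integral {t : ℝ} (ht : 0 < t) :
    ∫ θ in (0 : ℝ)..(Real.pi / 2), Real.cos θ / √(1 + (t * Real.cos θ) ^ 2) =
      Real.arctan t / t := by
  have h : ∀ θ ∈ Set.uIcc (0 : ℝ) (Real.pi / 2), HasDerivAt
      (fun θ => Real.arctan (t * Real.sin θ / √(1 + (t * Real.cos θ) ^ 2)) / t)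
      (Real.cos θ / √(1 + (t * Real.cos θ) ^ 2)) θ := by
    intro θ _
    have hp : 0 < 1 + (t * Real.cos θ) ^ 2 := by positivity
    have hD : HasDerivAt (fun θ => √(1 + (t * Real.cos θ) ^ 2))
        ((2 * (t * Real.cos θ) * (t * (-Real.sin θ))) / (2 * √(1 + (t * Real.cos θ) ^ 2))) θ := by
      refine HasDerivAt.sqrt ?_ hp.ne'
      have := (((Real.hasDerivAt_cos θ).const_mul t).pow 2).const_add 1
      refine this.congr_deriv ?_
      simp
    have hs : 0 < √(1 + (t * Real.cos θ) ^ 2) := Real.sqrt_pos.mpr hp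
    have hq : √(1 + (t * Real.cos θ) ^ 2) ^ 2 = 1 + (t * Real.cos θ) ^ 2 := Real.sq_sqrt hp.le
    have hu := ((((Real.hasDerivAt_sin θ).const_mul t).div hD hs.ne').arctan).div_const t
    refine hu.congr_deriv ?_
    symm
    rw [Pi.div_apply]
    have hsc := Real.sin_sq_add_cos_sq θ
    generalize √(1 + (t * Real.cos θ) ^ 2) = D at *
    have h1 : 1 + (t * Real.sin θ / D) ^ 2 = (1 + t ^ 2) / D ^ 2 := by
      field_simp
      linear_combination hq + t ^ 2 * hsc
    have h2 : (t * Real.cos θ * D - t * Real.sin θ * (2 * (t * Real.cos θ) * (t * -Real.sin θ) /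
        (2 * D))) / D ^ 2 = t * Real.cos θ * (1 + t ^ 2) / D ^ 3 := by
      field_simp
      linear_combination Real.cos θ * (hq + t ^ 2 * hsc)
    rw [h1, h2]
    have : (1 + t ^ 2) ≠ 0 := by positivity
    field_simp
  rw [integral_eq_sub_of_hasDerivAt h]
  · simp
  · apply Continuous.intervalIntegrable
    refine Continuous.div (by fun_prop) (by fun_prop) fun θ => ?_
    have : 0 < 1 + (t * Real.cos θ) ^ 2 := by positivity
    positivity

lemma integral_arctan_div :
    ∫ t in (0 : ℝ)..1, Real.arctan t / t = catalanConstant := by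
  have hintg : ∀ k : ℕ, IntegrableOn (fun t : ℝ => (-1 : ℝ) ^ k * t ^ (2 * k) / (2 * k + 1))
      (Set.Ioo 0 1) := by
    intro k
    have : Continuous (fun t : ℝ => (-1 : ℝ) ^ k * t ^ (2 * k) / (2 * k + 1)) := by fun_prop
    exact (this.integrableOn_Icc (a := 0) (b := 1)).mono_set Set.Ioo_subset_Icc_self
  have hval : ∀ k : ℕ, ∫ t in Set.Ioo (0 : ℝ) 1, t ^ (2 * k) / (2 * k + 1) =
      1 / (2 * k + 1) ^ 2 := by
    intro k
    rw [← integral_Ioc_eq_integral_Ioo, ← integral_of_le zero_le_one, intervalIntegral.integral_div, integral_pow]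
    push_cast
    field_simp
    simp
  have hsum : Summable (fun k : ℕ => ∫ t in Set.Ioo (0 : ℝ) 1,
      ‖(-1 : ℝ) ^ k * t ^ (2 * k) / (2 * k + 1)‖) := by
    have h1 : ∀ k : ℕ, ∫ t in Set.Ioo (0 : ℝ) 1, ‖(-1 : ℝ) ^ k * t ^ (2 * k) / (2 * k + 1)‖ =
        1 / (2 * k + 1) ^ 2 := by
      intro k
      rw [← hval k]
      refine setIntegral_congr_fun measurableSet_Ioo fun t ht => ?_
      have h0 : (0 : ℝ) ≤ 2 * k + 1 := by positivity
      have h2 : 0 ≤ t := ht.1.le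
      simp [abs_of_nonneg h0, abs_of_nonneg h2]
    simp only [h1]
    have h2 : Summable (fun k : ℕ => 1 / ((k : ℝ) + 1) ^ 2) := by
      have := (summable_nat_add_iff 1).mpr (Real.summable_one_div_nat_pow.mpr one_lt_two)
      simpa using this
    refine Summable.of_nonneg_of_le (fun k => by positivity) (fun k => ?_) h2
    gcongr
    have : (0 : ℝ) ≤ k := by positivity
    linarith
  have h := hasSum_integral_of_summable_integral_norm hintg hsum
  rw [catalanConstant, integral_of_le zero_le_one, integral_Ioc_eq_integral_Ioo]
  have e1 : ∀ k : ℕ, ∫ t in Set.Ioo (0 : ℝ) 1, (-1 : ℝ) ^ k * t ^ (2 * k) / (2 * k + 1) =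
      (-1) ^ k / (2 * k + 1) ^ 2 := by
    intro k
    have := hval k
    simp only [mul_div_assoc]
    rw [MeasureTheory.integral_const_mul, this]
    ring
  simp only [e1] at h
  rw [h.tsum_eq]
  refine setIntegral_congr_fun measurableSet_Ioo fun t ht => ?_
  have hs := Real.hasSum_arctan (x := t) (by rw [Real.norm_eq_abs, abs_of_pos ht.1]; exact ht.2)
  have hs2 := hs.div_const t
  rw [← hs2.tsum_eq]
  refine tsum_congr fun k => ?_
  have := ht.1.ne'
  push_cast
  field_simp
  ring

lemma integral_arsinh_cos :
    ∫ θ in (0 : ℝ)..(Real.pi / 2), Real.arsinh (Real.cos θ) = catalanConstant := by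
  rw [← integral_arctan_div]
  have e : ∀ θ, Real.arsinh (Real.cos θ) =
    ∫ t in (0 : ℝ)..1, Real.cos θ / √(1 + (t * Real.cos θ) ^ 2) :=
    fun θ => arsinh_eq_integral (Real.cos θ)
  simp only [e]
  have hp : (0 : ℝ) ≤ Real.pi / 2 := by positivity
  simp only [integral_of_le hp, integral_of_le zero_le_one]
  rw [integral_integral_swap]
  · refine setIntegral_congr_fun measurableSet_Ioc fun t ht => ?_
    rw [← integral_of_le hp, inner_integral ht.1]
  · have hc : Continuous (Function.uncurry fun θ t : ℝ =>
        Real.cos θ / √(1 + (t * Real.cos θ) ^ 2)) := by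
      refine Continuous.div (by fun_prop) (by fun_prop) fun x => ?_
      have : 0 < 1 + (x.2 * Real.cos x.1) ^ 2 := by positivity
      positivity
    rw [Measure.prod_restrict]
    have : IntegrableOn (Function.uncurry fun θ t : ℝ =>
        Real.cos θ / √(1 + (t * Real.cos θ) ^ 2))
        (Set.Icc (0 : ℝ) (Real.pi / 2) ×ˢ Set.Icc (0 : ℝ) 1) (volume.prod volume) :=
      hc.continuousOn.integrableOn_compact (isCompact_Icc.prod isCompact_Icc)
    exact this.mono_set (Set.prod_mono Set.Ioc_subset_Icc_self Set.Ioc_subset_Icc_self)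

/-- absolute energy -/
noncomputable def fE (θ : ℝ) : ℝ := |Real.arsinh (Real.cos θ)|

lemma fE_cont : Continuous fE := 
  continuous_abs.comp (Real.continuous_arsinh.comp Real.continuous_cos)

lemma fE_lip (x y : ℝ) : |fE x - fE y| ≤ |x - y| := by
  have h : LipschitzWith 1 Real.arsinh := by
    refine lipschitzWith_of_nnnorm_deriv_le (fun x => (Real.hasDerivAt_arsinh x).differentiableAt)
      fun x => ?_
    rw [(Real.hasDerivAt_arsinh x).deriv, ← NNReal.coe_le_coe]
    have : 1 ≤ √(1 + x ^ 2) := Real.one_le_sqrt.mpr (by nlinarith [sq_nonneg x])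
    simp only [coe_nnnorm, norm_inv, Real.norm_eq_abs, NNReal.coe_one]
    exact inv_le_one_of_one_le₀ (by rwa [abs_of_nonneg (Real.sqrt_nonneg _)])
  have h1 := h.dist_le_mul (Real.cos x) (Real.cos y)
  simp only [Real.dist_eq, NNReal.coe_one, one_mul] at h1
  exact (abs_abs_sub_abs_le_abs_sub _ _).trans (h1.trans (Real.abs_cos_sub_cos_le x y))

lemma fE_periodic : Function.Periodic fE Real.pi := by
  intro x
  simp [fE, Real.cos_add_pi, Real.arsinh_neg]

lemma integral_fE : ∫ θ in (0 : ℝ)..(2 * Real.pi), fE θ = 4 * catalanConstant := by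
  have hi : ∀ a b : ℝ, IntervalIntegrable fE volume a b := fun a b => fE_cont.intervalIntegrable a b
  have h1 : ∫ θ in (0 : ℝ)..(2 * Real.pi), fE θ = 2 * ∫ θ in (0 : ℝ)..Real.pi, fE θ := by
    rw [← integral_add_adjacent_intervals (hi 0 Real.pi) (hi _ _)]
    have := fE_periodic.intervalIntegral_add_eq 0 Real.pi
    rw [zero_add] at this
    rw [this, two_mul Real.pi, two_mul]
  have h2 : ∫ θ in (0 : ℝ)..Real.pi, fE θ = 2 * ∫ θ in (0 : ℝ)..(Real.pi / 2), fE θ := by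
    rw [← integral_add_adjacent_intervals (hi 0 (Real.pi / 2)) (hi _ _), two_mul]
    congr 1
    have h3 := integral_comp_sub_left (a := (0 : ℝ)) (b := Real.pi / 2) fE Real.pi
    rw [sub_zero, show Real.pi - Real.pi / 2 = Real.pi / 2 by ring] at h3
    rw [← h3]
    refine integral_congr fun θ _ => ?_
    simp [fE, Real.cos_pi_sub, Real.arsinh_neg]
  rw [h1, h2, ← integral_arsinh_cos]
  have h4 : ∫ θ in (0 : ℝ)..(Real.pi / 2), fE θ =
      ∫ θ in (0 : ℝ)..(Real.pi / 2), Real.arsinh (Real.cos θ) := by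
    refine integral_congr fun θ hθ => ?_
    rw [Set.uIcc_of_le (by positivity)] at hθ
    refine abs_of_nonneg (Real.arsinh_nonneg_iff.mpr (Real.cos_nonneg_of_mem_Icc ⟨?_, hθ.2⟩))
    have := hθ.1
    have := Real.pi_pos
    linarith
  rw [h4]; ring

lemma absSum_approx {n δ : ℕ} (hn : 0 < n) (hδ : δ < 2) :
    |absSum n δ * (2 * Real.pi / n) - 4 * catalanConstant| ≤ 4 * Real.pi ^ 2 / n := by
  have hn0 : (0 : ℝ) < n := by positivity
  have hpi := Real.pi_pos
  let a : ℕ → ℝ := fun r => 2 * r * Real.pi / n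
  have hi : ∀ a b : ℝ, IntervalIntegrable fE volume a b := fun a b => fE_cont.intervalIntegrable a b
  have h1 := sum_integral_adjacent_intervals (f := fE) (μ := volume) (a := a) (n := n)
    (fun k _ => hi _ _)
  have ha0 : a 0 = 0 := by simp [a]
  have han : a n = 2 * Real.pi := by simp only [a]; field_simp
  rw [ha0, han, integral_fE] at h1
  have hlen : ∀ r, a (r + 1) - a r = 2 * Real.pi / n := by
    intro r; simp only [a]; push_cast; field_simp; ring
  have h2 : ∀ r, |nrg n δ r| = fE (ang n δ r) := fun r => rfl
  rw [← h1, absSum, Finset.sum_mul, ← Finset.sum_sub_distrib]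
  have h3 : ∀ r ∈ Finset.range n, |(|nrg n δ r| * (2 * Real.pi / n) - ∫ x in a r..a (r + 1), fE x)| ≤
      (2 * Real.pi / n) * (2 * Real.pi / n) := by
    intro r _
    have h4 : |nrg n δ r| * (2 * Real.pi / n) - ∫ x in a r..a (r + 1), fE x =
        ∫ x in a r..a (r + 1), (fE (ang n δ r) - fE x) := by
      rw [integral_sub (by simp) (hi _ _), intervalIntegral.integral_const, hlen, h2, smul_eq_mul,
        mul_comm]
    have hle : a r ≤ a (r + 1) := by
      have := hlen r
      have : 0 < 2 * Real.pi / n := by positivity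
      linarith
    rw [h4, ← Real.norm_eq_abs]
    have := norm_integral_le_of_norm_le_const (a := a r) (b := a (r + 1)) (C := 2 * Real.pi / n)
      (f := fun x => fE (ang n δ r) - fE x) (fun x hx => by
        rw [Set.uIoc_of_le hle] at hx
        refine (fE_lip _ _).trans ?_
        have hδ' : (δ : ℝ) ≤ 1 := by exact_mod_cast (by omega : δ ≤ 1)
        have hb : a r ≤ ang n δ r ∧ ang n δ r ≤ a (r + 1) := by
          constructor
          · simp only [a, ang]; gcongr; simp
          · simp only [a, ang]; gcongr; push_cast; linarith
        have := hlen r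
        rw [abs_le]
        constructor <;> linarith [hx.1, hx.2, hb.1, hb.2])
    rwa [hlen, abs_of_pos (by positivity : 0 < 2 * Real.pi / n)] at this
  refine (Finset.abs_sum_le_sum_abs _ _).trans ((Finset.sum_le_sum h3).trans ?_)
  rw [Finset.sum_const, Finset.card_range, nsmul_eq_mul]
  apply le_of_eq
  field_simp
  ring

end Catalan


/-- (1/(mn))·log Z_{m,n} → G/π as m, n → ∞ through even integers, where Z_{m,n} is the
number of perfect matchings of the m×n torus grid graph and G is Catalan's constant. -/
theorem log_numPerfectMatchings_torus_tendsto :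
    ∀ ε : ℝ, 0 < ε → ∃ M : ℕ, ∀ m n : ℕ, Even m → Even n → M ≤ m → M ≤ n →
      |(1 / ((m : ℝ) * n)) * Real.log (numPerfectMatchings (torusGridGraph m n)) -
        catalanConstant / Real.pi| < ε := by
  intro ε hε
  obtain ⟨K, hK⟩ := exists_nat_gt ((Real.pi + 2) / ε)
  refine ⟨max 4 K, fun m n hm hn hMm hMn => ?_⟩
  have hm4 : 4 ≤ m := le_trans (le_max_left _ _) hMm
  have hn4 : 4 ≤ n := le_trans (le_max_left _ _) hMn
  have hKm : K ≤ m := le_trans (le_max_right _ _) hMm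
  have hKn : K ≤ n := le_trans (le_max_right _ _) hMn
  rw [numPM_eq hm4 hn4 hm hn]
  obtain ⟨h, rfl⟩ := hn
  have hh : 0 < h := by omega
  set n := h + h with hn
  have hpi := Real.pi_pos
  have hn0 : (0 : ℝ) < n := by exact_mod_cast (by omega : 0 < n)
  have hm0 : (0 : ℝ) < m := by exact_mod_cast (by omega : 0 < m)
  have hn1 : (1 : ℝ) ≤ n := by exact_mod_cast (by omega : 1 ≤ n)
  set G := catalanConstant
  -- energy bounds
  have habs : ∀ δ < 2, |absSum n δ / (2 * n) - G / Real.pi| ≤ Real.pi / n := by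
    intro δ hδ
    have h1 := absSum_approx (n := n) (by omega) hδ
    have h2 : absSum n δ / (2 * n) - G / Real.pi =
        (absSum n δ * (2 * Real.pi / n) - 4 * G) / (4 * Real.pi) := by
      field_simp
      ring
    rw [h2, abs_div, abs_of_pos (by positivity : 0 < 4 * Real.pi), div_le_iff₀ (by positivity)]
    refine h1.trans (le_of_eq ?_)
    field_simp
  have hup : ∀ δ < 2, absSum n δ ≤ 2 * n * (G / Real.pi + Real.pi / n) := by
    intro δ hδ
    have h1 := (abs_le.mp (habs δ hδ)).2
    have h2 : absSum n δ / (2 * n) ≤ G / Real.pi + Real.pi / n := by linarith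
    rw [div_le_iff₀ (by positivity)] at h2
    linarith
  have hlo : 2 * n * (G / Real.pi - Real.pi / n) ≤ absSum n (dlt h) := by
    have h1 := (abs_le.mp (habs (dlt h) (Nat.mod_lt _ (by norm_num)))).1
    have h2 : G / Real.pi - Real.pi / n ≤ absSum n (dlt h) / (2 * n) := by linarith
    rw [le_div_iff₀ (by positivity)] at h2
    linarith
  have hz1 := le_zForm hh m
  have hz2 := zForm_le hh m hup
  have hzpos : 0 < zForm n m := lt_of_lt_of_le (Real.exp_pos _) hz1
  have hlog1 : m / 2 * absSum n (dlt h) ≤ Real.log (zForm n m) := by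
    rw [Real.le_log_iff_exp_le hzpos]; exact hz1
  have hlog2 : Real.log (zForm n m) ≤
      Real.log 2 + (n * Real.log 2 + m / 2 * (2 * n * (G / Real.pi + Real.pi / n))) := by
    refine (Real.log_le_log hzpos hz2).trans (le_of_eq ?_)
    rw [Real.log_mul (by norm_num) (by positivity), Real.log_mul (by positivity)
      (Real.exp_pos _).ne', Real.log_pow, Real.log_exp]
  have hl2 : Real.log 2 ≤ 1 := by have := Real.log_two_lt_d9; linarith
  have hsmall_n : (Real.pi + 2) / n < ε := by
    rw [div_lt_iff₀ hn0]
    rw [div_lt_iff₀ hε] at hK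
    have : (K : ℝ) ≤ n := by exact_mod_cast hKn
    nlinarith
  have hsmall_m : (Real.pi + 2) / m < ε := by
    rw [div_lt_iff₀ hm0]
    rw [div_lt_iff₀ hε] at hK
    have : (K : ℝ) ≤ m := by exact_mod_cast hKm
    nlinarith
  have hmn : (0 : ℝ) < m * n := by positivity
  have hs : Real.pi / n + 2 / m < ε := by
    rw [div_lt_iff₀ hn0] at hsmall_n
    rw [div_lt_iff₀ hm0] at hsmall_m
    have e1 : Real.pi / n < Real.pi * ε / (Real.pi + 2) := by
      rw [div_lt_div_iff₀ hn0 (by positivity)]; nlinarith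
    have e2 : 2 / (m : ℝ) < 2 * ε / (Real.pi + 2) := by
      rw [div_lt_div_iff₀ hm0 (by positivity)]; nlinarith
    have e3 : Real.pi * ε / (Real.pi + 2) + 2 * ε / (Real.pi + 2) = ε := by
      field_simp
    linarith
  have hpin : 0 < Real.pi / n := by positivity
  have hm2 : 0 < 2 / (m : ℝ) := by positivity
  have e0 : (1 / ((m : ℝ) * n)) * Real.log (zForm n m) = Real.log (zForm n m) / (m * n) := by
    ring
  rw [e0, abs_lt]
  constructor
  · have : G / Real.pi - Real.pi / n ≤ Real.log (zForm n m) / (m * n) := by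
      rw [le_div_iff₀ hmn]
      refine le_trans (le_of_eq ?_) ((mul_le_mul_of_nonneg_left hlo (by positivity :
        0 ≤ (m : ℝ) / 2)).trans hlog1)
      ring
    linarith
  · have : Real.log (zForm n m) / (m * n) ≤ G / Real.pi + Real.pi / n + 2 / m := by
      rw [div_le_iff₀ hmn]
      refine hlog2.trans ?_
      have e4 : (G / Real.pi + Real.pi / n + 2 / m) * (m * n) =
          m / 2 * (2 * n * (G / Real.pi + Real.pi / n)) + 2 * n := by
        field_simp
      rw [e4]
      nlinarith
    linarith
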